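/- arXiv:2108.06840 — 3 statements merged into one kernel-verified Lean document; each statement's English description precedes it below -/
import Mathlib

section
/- Let d ≥ 1 be an integer and 1 < p < q < d, R ∈ (0,∞). Set μ = q/p and q' = pq/(q−p). Then for any p' ∈ [1, q'] there is a constant N = N(d,p,q) such that for every function u that is continuously differentiable on B̄_R: ‖u‖_{E_{p',μ−1}(B_R)} ≤ N ‖Du‖_{E_{p,μ}(B_R)} + N R^{−1} ‖u‖_{E_{p,μ}(B_R)}. -/
open MeasureTheory Metric Set Filter
open scoped ENNReal RealInnerProductSpace

noncomputable section

/-- Euclidean space `ℝ^d`. -/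
abbrev E (d : ℕ) : Type := EuclideanSpace ℝ (Fin d)

/-- Frobenius norm of a `d × d` matrix. -/
def frob {d : ℕ} (m : Matrix (Fin d) (Fin d) ℝ) : ℝ :=
  Real.sqrt (∑ i, ∑ j, (m i j) ^ 2)

/-- `F` is `δ`-elliptic: `δ tr w ≤ F (m + w) - F m ≤ δ⁻¹ tr w` for symmetric `m` and
symmetric positive semidefinite `w`. -/
def Elliptic {d : ℕ} (δ : ℝ) (F : Matrix (Fin d) (Fin d) ℝ → ℝ) : Prop :=
  ∀ m : Matrix (Fin d) (Fin d) ℝ, m.IsSymm →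
    ∀ w : Matrix (Fin d) (Fin d) ℝ, w.PosSemidef →
      δ * w.trace ≤ F (m + w) - F m ∧ F (m + w) - F m ≤ δ⁻¹ * w.trace

/-- Gradient of `u : ℝ^d → ℝ` as a vector in `ℝ^d`. -/
def grad {d : ℕ} (u : E d → ℝ) (x : E d) : E d :=
  (EuclideanSpace.equiv (Fin d) ℝ).symm fun i => fderiv ℝ u x (EuclideanSpace.single i 1)

/-- Hessian matrix of `u : ℝ^d → ℝ`. -/
def hess {d : ℕ} (u : E d → ℝ) (x : E d) : Matrix (Fin d) (Fin d) ℝ :=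
  Matrix.of fun i j =>
    fderiv ℝ (fun y => fderiv ℝ u y (EuclideanSpace.single j 1)) x (EuclideanSpace.single i 1)

/-- Normalized `L_p` norm `(⨍_B |g|^p)^{1/p}` (average over `B`). -/
def nLp {d : ℕ} (p : ℝ) (B : Set (E d)) (g : E d → ℝ) : ℝ≥0∞ :=
  ((volume B)⁻¹ * ∫⁻ y in B, ENNReal.ofReal (|g y| ^ p)) ^ (1 / p)

/-- Unnormalized `L_p` norm `(∫_A |g|^p)^{1/p}`. -/
def Lpn {d : ℕ} (p : ℝ) (A : Set (E d)) (g : E d → ℝ) : ℝ≥0∞ :=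
  (∫⁻ y in A, ENNReal.ofReal (|g y| ^ p)) ^ (1 / p)

/-- Morrey norm `‖g‖_{E_{p,μ}(Ω)} = sup_{ρ>0, x∈Ω} ρ^μ (⨍_{B_ρ(x)} |g 1_Ω|^p)^{1/p}`. -/
def morrey {d : ℕ} (p μ : ℝ) (Ω : Set (E d)) (g : E d → ℝ) : ℝ≥0∞ :=
  ⨆ (ρ : ℝ) (_ : 0 < ρ) (x : E d) (_ : x ∈ Ω),
    ENNReal.ofReal (ρ ^ μ) * nLp p (ball x ρ) (Ω.indicator g)

/-- The `(θ, R₀)`-oscillation condition on `F(m, x)`. -/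
def OscCond {d : ℕ} (δ θ R₀ : ℝ) (F : Matrix (Fin d) (Fin d) ℝ → E d → ℝ) : Prop :=
  ∀ r ∈ Set.Ioc (0 : ℝ) R₀, ∀ z : E d,
    ∃ Fb : Matrix (Fin d) (Fin d) ℝ → ℝ,
      ConvexOn ℝ Set.univ Fb ∧ Elliptic δ Fb ∧ Fb 0 = 0 ∧
      ∀ m : Matrix (Fin d) (Fin d) ℝ, m.IsSymm → frob m = 1 →
        (volume (ball z r))⁻¹ *
            ∫⁻ x in ball z r,
              ⨆ (τ : ℝ) (_ : 0 < τ), ENNReal.ofReal (τ⁻¹ * |F (τ • m) x - Fb (τ • m)|)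
          ≤ ENNReal.ofReal θ

/-- The homogeneity bound `|F(ζ m, x)| ≤ ζ |F(m, x)| + K(x)` for `ζ ∈ [0,1]`. -/
def HomBound {d : ℕ} (F : Matrix (Fin d) (Fin d) ℝ → E d → ℝ) (K : E d → ℝ) : Prop :=
  ∀ ζ ∈ Set.Icc (0 : ℝ) 1, ∀ m : Matrix (Fin d) (Fin d) ℝ, m.IsSymm → ∀ x : E d,
    |F (ζ • m) x| ≤ ζ * |F m x| + K x


def Aav {d : ℕ} (F : E d → ℝ≥0∞) (x : E d) (s : ℝ) : ℝ≥0∞ :=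
  (volume (ball (0 : E d) s))⁻¹ * ∫⁻ y in ball x s, F y

lemma vol_ball_eq {d : ℕ} (x : E d) {r : ℝ} (hr : 0 < r) :
    volume (ball x r) = ENNReal.ofReal (r ^ d) * volume (ball (0 : E d) 1) := by
  have := Measure.addHaar_ball_of_pos (volume : Measure (E d)) x hr
  simpa using this

lemma vol_ball_center {d : ℕ} (x : E d) (r : ℝ) :
    volume (ball x r) = volume (ball (0 : E d) r) :=
  Measure.addHaar_ball_center _ x r

lemma vol_ball_pos {d : ℕ} (x : E d) {r : ℝ} (hr : 0 < r) : volume (ball x r) ≠ 0 :=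
  (measure_ball_pos _ x hr).ne'

lemma vol_ball_top {d : ℕ} (x : E d) (r : ℝ) : volume (ball x r) ≠ ⊤ :=
  measure_ball_lt_top.ne

lemma vol_ball_mul {d : ℕ} (x z : E d) {c r : ℝ} (hc : 0 < c) :
    volume (ball x (c * r)) = ENNReal.ofReal (c ^ d) * volume (ball z r) := by
  have := Measure.addHaar_ball_mul_of_pos (volume : Measure (E d)) x hc r
  rw [vol_ball_center z]
  simpa using this

lemma ball_integral_eq {d : ℕ} (F : E d → ℝ≥0∞) (x : E d) (s : ℝ) :
    ∫⁻ y in ball x s, F y = ∫⁻ y, {z : (E d × ℝ) × E d | dist z.2 z.1.1 < z.1.2}.indicator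
      (fun z => F z.2) ((x, s), y) := by
  rw [← lintegral_indicator measurableSet_ball]
  rfl

lemma meas_ind {d : ℕ} {F : E d → ℝ≥0∞} (hF : Measurable F) :
    Measurable ({z : (E d × ℝ) × E d | dist z.2 z.1.1 < z.1.2}.indicator (fun z => F z.2)) := by
  apply Measurable.indicator (by fun_prop)
  exact measurableSet_lt (by fun_prop) (by fun_prop)

lemma meas_Aav {d : ℕ} {F : E d → ℝ≥0∞} (hF : Measurable F) :
    Measurable (fun z : E d × ℝ => Aav F z.1 z.2) := by
  unfold Aav
  apply Measurable.mul
  · apply Measurable.inv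
    have : Monotone (fun s : ℝ => volume (ball (0 : E d) s)) :=
      fun a b h => measure_mono (ball_subset_ball h)
    exact this.measurable.comp measurable_snd
  · simp_rw [ball_integral_eq]
    exact (meas_ind hF).lintegral_prod_right'

lemma Aav_lintegral_le {d : ℕ} {F : E d → ℝ≥0∞} (hF : Measurable F) (x0 : E d) {s ρ : ℝ}
    (hs : 0 < s) (hsρ : s ≤ ρ) :
    ∫⁻ x in ball x0 ρ, Aav F x s ≤ ∫⁻ y in ball x0 (2 * ρ), F y := by
  have h1 : ∀ x ∈ ball x0 ρ, Aav F x s = (volume (ball (0 : E d) s))⁻¹ *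
      ∫⁻ y in ball x0 (2 * ρ), (ball x s).indicator F y := by
    intro x hx
    unfold Aav
    rw [lintegral_indicator measurableSet_ball, Measure.restrict_restrict measurableSet_ball,
      inter_eq_left.2]
    intro y hy
    rw [mem_ball] at *
    linarith [dist_triangle y x x0]
  rw [setLIntegral_congr_fun measurableSet_ball h1]
  have hm : Measurable (Function.uncurry fun x y : E d => (ball x s).indicator F y) := by
    have := (meas_ind hF).comp
      (show Measurable (fun z : E d × E d => ((z.1, s), z.2)) by fun_prop)
    exact this
  rw [lintegral_const_mul _ (by exact hm.lintegral_prod_right'),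
    lintegral_lintegral_swap hm.aemeasurable,
    ← lintegral_const_mul _ (by exact hm.lintegral_prod_left')]
  apply lintegral_mono
  intro y
  have h2 : ∀ x : E d, (ball x s).indicator F y = (ball y s).indicator (fun _ => F y) x := by
    intro x
    simp only [indicator, mem_ball, dist_comm]
  simp_rw [h2]
  calc _ ≤ (volume (ball (0 : E d) s))⁻¹ * ∫⁻ x, (ball y s).indicator (fun _ => F y) x := by
        gcongr
        exact Measure.restrict_le_self
    _ = F y := by
        rw [lintegral_indicator measurableSet_ball, setLIntegral_const, vol_ball_center y,
          mul_comm (F y), ← mul_assoc, ENNReal.inv_mul_cancel (vol_ball_pos _ hs)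
          (vol_ball_top _ _), one_mul]
    _ ≤ _ := le_rfl

/-- averaging measure -/
def avm {d : ℕ} (B : Set (E d)) : Measure (E d) := (volume B)⁻¹ • volume.restrict B

lemma avm_prob {d : ℕ} (x : E d) {r : ℝ} (hr : 0 < r) : IsProbabilityMeasure (avm (ball x r)) := by
  constructor
  simp [avm, ENNReal.inv_mul_cancel (vol_ball_pos x hr) (vol_ball_top x r)]

lemma nLp_eq {d : ℕ} {p : ℝ} (hp : 0 < p) (B : Set (E d)) (g : E d → ℝ) :
    nLp p B g = eLpNorm g (ENNReal.ofReal p) (avm B) := by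
  rw [eLpNorm_eq_lintegral_rpow_enorm_toReal (by simpa using hp) (by simp),
    ENNReal.toReal_ofReal hp.le]
  unfold nLp avm
  rw [lintegral_smul_measure, smul_eq_mul]
  congr 3
  ext y
  rw [← ofReal_norm, Real.norm_eq_abs, ENNReal.ofReal_rpow_of_nonneg (abs_nonneg _) hp.le]

lemma nLp_mono_exp {d : ℕ} {p q : ℝ} (hp : 0 < p) (hpq : p ≤ q) (x : E d) {r : ℝ} (hr : 0 < r)
    {g : E d → ℝ} (hg : Measurable g) : nLp p (ball x r) g ≤ nLp q (ball x r) g := by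
  have := avm_prob x hr
  rw [nLp_eq hp, nLp_eq (hp.trans_le hpq)]
  exact eLpNorm_le_eLpNorm_of_exponent_le (ENNReal.ofReal_le_ofReal hpq) hg.aestronglyMeasurable

lemma Aav_eq_nLp {d : ℕ} (x : E d) (s : ℝ) {g : E d → ℝ} (hg : ∀ x, 0 ≤ g x) :
    Aav (fun y => ENNReal.ofReal (g y)) x s = nLp 1 (ball x s) g := by
  unfold Aav nLp
  simp only [Real.rpow_one, ne_eq, one_ne_zero, not_false_eq_true, div_self, ENNReal.rpow_one]
  rw [vol_ball_center x]
  congr 2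
  ext y
  rw [abs_of_nonneg (hg y)]

lemma tail_le {μ K r : ℝ} (hμ : 1 < μ) (hK : 0 < K) (hr : 0 < r) {A : ℝ → ℝ≥0∞}
    (hA : ∀ s, 0 < s → A s ≤ ENNReal.ofReal (K * s ^ (-μ))) :
    ∫⁻ s in Ioi r, A s ≤ ENNReal.ofReal (K * r ^ (1 - μ) / (μ - 1)) := by
  have h1 : ∫⁻ s in Ioi r, A s ≤ ∫⁻ s in Ioi r, ENNReal.ofReal (K * s ^ (-μ)) :=
    setLIntegral_mono' measurableSet_Ioi fun s hs => hA s (hr.trans hs)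
  refine h1.trans ?_
  have hi := integrableOn_Ioi_rpow_of_lt (a := -μ) (by linarith) hr
  rw [← ofReal_integral_eq_lintegral_ofReal (hi.const_mul K)]
  · rw [integral_const_mul, integral_Ioi_rpow_of_lt (by linarith) hr]
    apply ENNReal.ofReal_le_ofReal
    apply le_of_eq
    rw [show -μ + 1 = -(μ - 1) by ring, show 1 - μ = -(μ - 1) by ring]
    field_simp
  · filter_upwards [self_mem_ae_restrict measurableSet_Ioi] with s hs
    have : 0 < s := hr.trans hs
    positivity

lemma Aav_split {d : ℕ} {f : E d → ℝ} (hf : Measurable f) (η : ℝ)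
    (x : E d) {s : ℝ} (hs : 0 < s) :
    Aav (fun y => ENNReal.ofReal (f y)) x s ≤
      Aav ({y | η < f y}.indicator fun y => ENNReal.ofReal (f y)) x s + ENNReal.ofReal η := by
  have hm : MeasurableSet {y | η < f y} := measurableSet_lt measurable_const hf
  have h1 : ∀ y, ENNReal.ofReal (f y) ≤
      ({y | η < f y}.indicator fun y => ENNReal.ofReal (f y)) y + ENNReal.ofReal η := by
    intro y
    by_cases h : η < f y
    · simp [indicator, h]
    · simp only [indicator, mem_ofPred_eq, h, if_false, zero_add]
      exact ENNReal.ofReal_le_ofReal (not_lt.1 h)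
  unfold Aav
  calc _ ≤ (volume (ball (0 : E d) s))⁻¹ * ∫⁻ y in ball x s,
        (({y | η < f y}.indicator fun y => ENNReal.ofReal (f y)) y + ENNReal.ofReal η) := by
        gcongr with y
        exact h1 y
    _ = _ := by
        rw [lintegral_add_right _ measurable_const, mul_add, setLIntegral_const,
          vol_ball_center x, mul_comm (ENNReal.ofReal η), ← mul_assoc,
          ENNReal.inv_mul_cancel (vol_ball_pos _ hs) (vol_ball_top _ _), one_mul]

lemma weak_est {d : ℕ} {f : E d → ℝ} (hf : Measurable f) {Ω : Set (E d)} (hΩ : MeasurableSet Ω)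
    {w : E d → ℝ}
    (hwV : ∀ x ∈ Ω, ENNReal.ofReal (w x) ≤
      ∫⁻ s in Ioi 0, Aav (fun y => ENNReal.ofReal (f y)) x s)
    {l r ρ : ℝ} (hl : 0 < l) (hr : 0 < r) (hrρ : r ≤ ρ)
    (htail : ∀ x ∈ Ω, ∫⁻ s in Ioi r, Aav (fun y => ENNReal.ofReal (f y)) x s ≤
      ENNReal.ofReal (l / 2)) (x0 : E d) :
    volume.restrict (ball x0 ρ ∩ Ω) {x | l < w x} ≤
      ENNReal.ofReal (4 * r / l) * ∫⁻ y in ball x0 (2 * ρ),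
        ({y | l / (4 * r) < f y}.indicator fun y => ENNReal.ofReal (f y)) y := by
  set F : E d → ℝ≥0∞ := fun y => ENNReal.ofReal (f y) with hFdef
  set η := l / (4 * r) with hη
  set G : E d → ℝ≥0∞ := {y | η < f y}.indicator F with hG
  have hFm : Measurable F := hf.ennreal_ofReal
  have hGm : Measurable G := hFm.indicator (measurableSet_lt measurable_const hf)
  have hη0 : 0 < η := by positivity
  have hkey : ∀ x ∈ Ω, l < w x → ENNReal.ofReal (l / 4) ≤ ∫⁻ s in Ioc 0 r, Aav G x s := by
    intro x hx hlw
    have h1 : ENNReal.ofReal l ≤ ∫⁻ s in Ioi 0, Aav F x s :=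
      (ENNReal.ofReal_le_ofReal hlw.le).trans (hwV x hx)
    rw [← Ioc_union_Ioi_eq_Ioi hr.le, lintegral_union measurableSet_Ioi
      (by rw [Set.disjoint_left]; intro a ha hb; exact not_lt.2 ha.2 hb)] at h1
    have h2 : ∫⁻ s in Ioc 0 r, Aav F x s ≤ (∫⁻ s in Ioc 0 r, Aav G x s) + ENNReal.ofReal (l/4) := by
      calc _ ≤ ∫⁻ s in Ioc 0 r, (Aav G x s + ENNReal.ofReal η) :=
            setLIntegral_mono' measurableSet_Ioc fun s hs => Aav_split hf η x hs.1
        _ = _ := by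
            rw [lintegral_add_right _ measurable_const, setLIntegral_const, Real.volume_Ioc,
              ← ENNReal.ofReal_mul hη0.le, hη]
            congr 2
            field_simp
            ring
    have h3 := h1.trans (add_le_add h2 (htail x hx))
    have h4 : ENNReal.ofReal l = ENNReal.ofReal (l / 4) +
        (ENNReal.ofReal (l / 4) + ENNReal.ofReal (l / 2)) := by
      rw [← ENNReal.ofReal_add (by positivity) (by positivity),
        ← ENNReal.ofReal_add (by positivity) (by positivity)]
      congr 1
      ring
    rw [h4, add_assoc] at h3
    exact (ENNReal.add_le_add_iff_right (by simp)).1 h3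
  have hAm := meas_Aav hGm
  have hUm : Measurable fun x => ∫⁻ s in Ioc 0 r, Aav G x s := hAm.lintegral_prod_right'
  have hM := mul_meas_ge_le_lintegral (μ := volume.restrict (ball x0 ρ)) hUm (ENNReal.ofReal (l/4))
  have hset : volume.restrict (ball x0 ρ ∩ Ω) {x | l < w x} ≤
      volume.restrict (ball x0 ρ) {x | ENNReal.ofReal (l/4) ≤ ∫⁻ s in Ioc 0 r, Aav G x s} := by
    rw [Measure.restrict_apply' (measurableSet_ball.inter hΩ),
      Measure.restrict_apply' measurableSet_ball]
    apply measure_mono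
    rintro x ⟨hx1, hx2, hx3⟩
    exact ⟨hkey x hx3 hx1, hx2⟩
  have hI : ∫⁻ x in ball x0 ρ, ∫⁻ s in Ioc 0 r, Aav G x s ≤
      ENNReal.ofReal r * ∫⁻ y in ball x0 (2 * ρ), G y := by
    rw [lintegral_lintegral_swap (by exact hAm.aemeasurable)]
    calc _ ≤ ∫⁻ s in Ioc 0 r, ∫⁻ y in ball x0 (2 * ρ), G y :=
          setLIntegral_mono' measurableSet_Ioc
            fun s hs => Aav_lintegral_le hGm x0 hs.1 (hs.2.trans hrρ)
      _ = _ := by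
          rw [setLIntegral_const, Real.volume_Ioc, mul_comm, sub_zero]
  have h5 := hM.trans hI
  have hl4 : ENNReal.ofReal (l / 4) ≠ 0 := by simpa using hl
  calc _ ≤ _ := hset
    _ ≤ (ENNReal.ofReal (l/4))⁻¹ * (ENNReal.ofReal r * ∫⁻ y in ball x0 (2 * ρ), G y) := by
        rw [mul_comm (ENNReal.ofReal (l/4))⁻¹, ← div_eq_mul_inv,
          ENNReal.le_div_iff_mul_le (Or.inl hl4) (Or.inl (by simp)), mul_comm]
        exact h5
    _ = _ := by
        rw [← mul_assoc, ← ENNReal.ofReal_inv_of_pos (by positivity),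
          ← ENNReal.ofReal_mul (by positivity)]
        congr 2
        field_simp

lemma int_pow {a Λ : ℝ} (ha : 0 < a) (hΛ : 0 ≤ Λ) :
    ∫⁻ t in Ioo 0 Λ, ENNReal.ofReal (t ^ (a - 1)) = ENNReal.ofReal (Λ ^ a / a) := by
  have hi : IntervalIntegrable (fun t : ℝ => t ^ (a - 1)) volume 0 Λ :=
    intervalIntegral.intervalIntegrable_rpow' (by linarith)
  rw [intervalIntegrable_iff_integrableOn_Ioo_of_le hΛ] at hi
  rw [← ofReal_integral_eq_lintegral_ofReal hi]
  · rw [← integral_Ioc_eq_integral_Ioo, ← intervalIntegral.integral_of_le hΛ,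
      integral_rpow (Or.inl (by linarith))]
    simp [Real.zero_rpow ha.ne']
  · filter_upwards [self_mem_ae_restrict measurableSet_Ioo] with s hs
    exact Real.rpow_nonneg hs.1.le _

lemma strong_est {d : ℕ} {f : E d → ℝ} (hf : Measurable f) (hf0 : ∀ y, 0 ≤ f y)
    {Ω : Set (E d)} (hΩ : MeasurableSet Ω)
    {w : E d → ℝ} (hw : Measurable w) (hw0 : ∀ x, 0 ≤ w x)
    (hwV : ∀ x ∈ Ω, ENNReal.ofReal (w x) ≤
      ∫⁻ s in Ioi 0, Aav (fun y => ENNReal.ofReal (f y)) x s)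
    {m κ p ρ l0 : ℝ} (hm : 0 < m) (hκ : 0 < κ) (hp : 1 < p) (hρ : 0 < ρ) (hl0 : 0 < l0)
    (hlρ : ∀ t, l0 ≤ t → κ * t ^ (-m) ≤ ρ)
    (htail : ∀ t, 0 < t → ∀ x ∈ Ω, ∫⁻ s in Ioi (κ * t ^ (-m)),
      Aav (fun y => ENNReal.ofReal (f y)) x s ≤ ENNReal.ofReal (t / 2)) (x0 : E d) :
    ∫⁻ x in ball x0 ρ ∩ Ω, ENNReal.ofReal (w x ^ (p * (1 + m))) ≤
      ENNReal.ofReal (l0 ^ (p * (1 + m))) * volume (ball x0 ρ) +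
      ENNReal.ofReal (p * (4 * κ) ^ p / (p - 1)) *
        ∫⁻ y in ball x0 (2 * ρ), ENNReal.ofReal (f y ^ p) := by
  set Q := p * (1 + m) with hQ
  have hQ0 : 0 < Q := by positivity
  set b := (p - 1) * (1 + m) with hb
  have hb0 : 0 < b := mul_pos (by linarith) (by linarith)
  rw [lintegral_rpow_eq_lintegral_meas_lt_mul _ (Eventually.of_forall hw0) hw.aemeasurable hQ0]
  set B2 := ball x0 (2 * ρ)
  -- the double integrand
  let S : Set (ℝ × E d) := {z | z.1 / (4 * (κ * z.1 ^ (-m))) < f z.2}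
  let Φ : ℝ → E d → ℝ≥0∞ := fun t y => S.indicator
    (fun z => ENNReal.ofReal (4 * κ) * ENNReal.ofReal (z.1 ^ (b - 1)) * ENNReal.ofReal (f z.2)) (t, y)
  have hSm : MeasurableSet S := measurableSet_lt (by fun_prop) (by fun_prop)
  have hΦm : Measurable (Function.uncurry Φ) := by
    apply Measurable.indicator _ hSm
    fun_prop
  have hpt : ∀ t ∈ Ioi (0:ℝ), volume.restrict (ball x0 ρ ∩ Ω) {a | t < w a} *
      ENNReal.ofReal (t ^ (Q - 1)) ≤
      (Iio l0).indicator (fun t => volume (ball x0 ρ) * ENNReal.ofReal (t ^ (Q - 1))) t +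
      ∫⁻ y in B2, Φ t y := by
    intro t ht
    have ht : 0 < t := ht
    by_cases h : t < l0
    · simp only [indicator, mem_Iio, h, if_true]
      refine le_add_right ?_
      refine mul_le_mul_left ?_ _
      calc _ ≤ volume.restrict (ball x0 ρ ∩ Ω) univ := measure_mono (subset_univ _)
        _ ≤ _ := by
          rw [Measure.restrict_apply_univ]
          exact measure_mono inter_subset_left
    · simp only [indicator, mem_Iio, h, if_false, zero_add]
      have hr : 0 < κ * t ^ (-m) := by positivity
      have := weak_est hf hΩ hwV ht hr (hlρ t (not_lt.1 h)) (htail t ht) x0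
      calc _ ≤ _ := mul_le_mul_left this _
        _ = ∫⁻ y in B2, Φ t y := by
          rw [mul_right_comm, ← ENNReal.ofReal_mul (by positivity), ← lintegral_const_mul]
          · apply lintegral_congr
            intro y
            simp only [Φ, S, indicator, mem_ofPred_eq]
            split_ifs
            · congr 1
              rw [← ENNReal.ofReal_mul (by positivity)]
              congr 1
              have : b - 1 = -m + (Q - 1) - 1 := by rw [hb, hQ]; ring
              rw [this, Real.rpow_sub ht (-m + (Q - 1)), Real.rpow_add ht (-m), Real.rpow_one]
              field_simp
            · simp
          · exact (hf.ennreal_ofReal).indicator (measurableSet_lt measurable_const hf)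
  have hinner : ∀ y, ∫⁻ t in Ioi 0, Φ t y ≤
      ENNReal.ofReal ((4 * κ) ^ p / b) * ENNReal.ofReal (f y ^ p) := by
    intro y
    set Λ := (4 * κ * f y) ^ (1 / (1 + m)) with hΛ
    have hfy := hf0 y
    have hΛ0 : 0 ≤ Λ := by positivity
    have hle : ∀ t ∈ Ioi (0:ℝ), Φ t y ≤ (Ioo 0 Λ).indicator
          (fun t => ENNReal.ofReal (4 * κ) * ENNReal.ofReal (f y) *
            ENNReal.ofReal (t ^ (b - 1))) t := by
      intro t ht
      have ht : 0 < t := ht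
      simp only [Φ, S, indicator, mem_ofPred_eq]
      split_ifs with h1 h2 h2
      · apply le_of_eq; ring
      · exfalso
        apply h2
        refine ⟨ht, ?_⟩
        rw [div_lt_iff₀ (by positivity), Real.rpow_neg ht.le] at h1
        have h3 : t ^ (1 + m) < 4 * κ * f y := by
          rw [Real.rpow_add ht, Real.rpow_one]
          have : 0 < t ^ m := by positivity
          calc t * t ^ m < (f y * (4 * (κ * (t ^ m)⁻¹))) * t ^ m := by gcongr
            _ = _ := by field_simp
        rw [hΛ]
        calc t = (t ^ (1 + m)) ^ (1 / (1 + m)) := by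
              rw [← Real.rpow_mul ht.le, mul_one_div_cancel (by positivity), Real.rpow_one]
          _ < _ := Real.rpow_lt_rpow (by positivity) h3 (by positivity)
      · simp
      · simp
    calc _ ≤ ∫⁻ t in Ioi 0, (Ioo 0 Λ).indicator
          (fun t => ENNReal.ofReal (4 * κ) * ENNReal.ofReal (f y) *
            ENNReal.ofReal (t ^ (b - 1))) t :=
          setLIntegral_mono' measurableSet_Ioi hle
      _ ≤ ∫⁻ t, (Ioo 0 Λ).indicator
          (fun t => ENNReal.ofReal (4 * κ) * ENNReal.ofReal (f y) *
            ENNReal.ofReal (t ^ (b - 1))) t :=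
          lintegral_mono' Measure.restrict_le_self le_rfl
      _ = ENNReal.ofReal (4 * κ) * ENNReal.ofReal (f y) * ENNReal.ofReal (Λ ^ b / b) := by
          rw [lintegral_indicator measurableSet_Ioo, lintegral_const_mul _ (by fun_prop),
            int_pow hb0 hΛ0]
      _ = _ := by
          rw [← ENNReal.ofReal_mul (by positivity), ← ENNReal.ofReal_mul (by positivity),
            ← ENNReal.ofReal_mul (by positivity)]
          congr 1
          rw [hΛ, ← Real.rpow_mul (by positivity), hb,
            show 1 / (1 + m) * ((p - 1) * (1 + m)) = p - 1 by field_simp]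
          have hx : ∀ z : ℝ, 0 ≤ z → z ^ p = z * z ^ (p - 1) := by
            intro z hz
            conv_lhs => rw [show p = 1 + (p - 1) by ring]
            rw [Real.rpow_add_of_nonneg hz (by norm_num) (by linarith), Real.rpow_one]
          rw [Real.mul_rpow (by positivity) hfy, hx (4 * κ) (by positivity), hx _ hfy]
          ring
  calc _ ≤ ENNReal.ofReal Q * ∫⁻ t in Ioi 0,
        ((Iio l0).indicator (fun t => volume (ball x0 ρ) * ENNReal.ofReal (t ^ (Q - 1))) t +
          ∫⁻ y in B2, Φ t y) := by
        gcongr 1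
        exact setLIntegral_mono' measurableSet_Ioi hpt
    _ = ENNReal.ofReal Q * (volume (ball x0 ρ) * ENNReal.ofReal (l0 ^ Q / Q) +
          ∫⁻ y in B2, ∫⁻ t in Ioi 0, Φ t y) := by
        rw [lintegral_add_right _ (by exact hΦm.lintegral_prod_right'),
          lintegral_lintegral_swap hΦm.aemeasurable, lintegral_indicator measurableSet_Iio,
          Measure.restrict_restrict measurableSet_Iio, Iio_inter_Ioi,
          lintegral_const_mul _ (by fun_prop), int_pow hQ0 hl0.le]
    _ ≤ ENNReal.ofReal Q * (volume (ball x0 ρ) * ENNReal.ofReal (l0 ^ Q / Q) +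
          ∫⁻ y in B2, ENNReal.ofReal ((4 * κ) ^ p / b) * ENNReal.ofReal (f y ^ p)) := by
        gcongr with y
        exact hinner y
    _ = _ := by
        rw [lintegral_const_mul _ (by fun_prop), mul_add, mul_left_comm,
          ← ENNReal.ofReal_mul hQ0.le, ← mul_assoc, ← ENNReal.ofReal_mul hQ0.le,
          mul_comm (volume _)]
        congr 3
        · field_simp
        · rw [hQ, hb]
          have : p - 1 ≠ 0 := by linarith
          field_simp

lemma line_est {d : ℕ} {R : ℝ} (hR : 0 < R) {u : E d → ℝ}
    (hu : ContDiffOn ℝ 1 u (ball (0 : E d) R)) {x y : E d}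
    (hx : x ∈ ball (0 : E d) R) (hy : y ∈ ball (0 : E d) R) :
    ‖u x‖ₑ ≤ ‖u y‖ₑ + ∫⁻ s in Ioc 0 (2 * R), ENNReal.ofReal
      ((ball (0 : E d) R).indicator (fun z => ‖fderiv ℝ u z‖) (x + (s / (2 * R)) • (y - x))) := by
  set L := 2 * R with hL
  have hL0 : 0 < L := by positivity
  let γ : ℝ → E d := fun s => x + (s / L) • (y - x)
  have hγ : ContDiff ℝ 1 γ := by fun_prop
  have hmaps : ∀ s ∈ Icc 0 L, γ s ∈ ball (0 : E d) R := by
    intro s hs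
    have h01 : s / L ∈ Icc (0:ℝ) 1 :=
      ⟨div_nonneg hs.1 hL0.le, div_le_one_of_le₀ hs.2 hL0.le⟩
    exact (convex_ball (0 : E d) R).add_smul_sub_mem hx hy h01
  have h1 := enorm_sub_le_lintegral_deriv_of_contDiffOn_Icc
    (hu.comp hγ.contDiffOn hmaps) hL0.le
  have e1 : γ L = y := by simp [γ, hL0.ne']
  have e0 : γ 0 = x := by simp [γ]
  simp only [Function.comp_apply, e1, e0] at h1
  have h2 : ∫⁻ s in Icc 0 L, ‖deriv (u ∘ γ) s‖ₑ ≤ ∫⁻ s in Ioc 0 L, ENNReal.ofReal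
      ((ball (0 : E d) R).indicator (fun z => ‖fderiv ℝ u z‖) (x + (s / L) • (y - x))) := by
    rw [← restrict_Ioc_eq_restrict_Icc]
    refine setLIntegral_mono' measurableSet_Ioc fun s hs => ?_
    have hm := hmaps s ⟨hs.1.le, hs.2⟩
    have hd : DifferentiableAt ℝ u (γ s) :=
      ((hu _ hm).contDiffAt (isOpen_ball.mem_nhds hm)).differentiableAt one_ne_zero
    have hg : HasDerivAt γ ((1 / L) • (y - x)) s := by
      have := ((hasDerivAt_id s).div_const L).smul_const (y - x)
      exact this.const_add x
    have := (hd.hasFDerivAt.comp_hasDerivAt s hg).deriv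
    rw [this]
    change _ ≤ ENNReal.ofReal ((ball (0 : E d) R).indicator (fun z => ‖fderiv ℝ u z‖) (γ s))
    rw [indicator_of_mem hm, ← ofReal_norm]
    apply ENNReal.ofReal_le_ofReal
    calc _ ≤ ‖fderiv ℝ u (γ s)‖ * ‖(1 / L) • (y - x)‖ := ContinuousLinearMap.le_opNorm _ _
      _ ≤ ‖fderiv ℝ u (γ s)‖ * 1 := by
        gcongr
        rw [norm_smul, Real.norm_of_nonneg (by positivity), one_div, inv_mul_le_iff₀ hL0, mul_one]
        rw [mem_ball_zero_iff] at hx hy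
        linarith [norm_sub_le y x]
      _ = _ := mul_one _
  calc ‖u x‖ₑ = ‖u y - (u y - u x)‖ₑ := by rw [sub_sub_cancel]
    _ ≤ ‖u y‖ₑ + ‖u y - u x‖ₑ := enorm_sub_le
    _ ≤ _ := by gcongr; exact h1.trans h2

lemma dil_int {d : ℕ} {H : E d → ℝ≥0∞} (hH : Measurable H) (x : E d) {c : ℝ} (hc : 0 < c) :
    ∫⁻ y, H (x + c • (y - x)) = ENNReal.ofReal ((c ^ d)⁻¹) * ∫⁻ z, H z := by
  rw [lintegral_sub_right_eq_self (fun y => H (x + c • y)) x]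
  have hm : Measurable (fun z => H (x + z)) := by fun_prop
  have := lintegral_map (μ := (volume : Measure (E d))) hm (measurable_const_smul c)
  rw [← this, Measure.map_addHaar_smul _ hc.ne', lintegral_smul_measure,
    lintegral_add_left_eq_self H x, smul_eq_mul, abs_of_nonneg (by positivity)]
  simp

set_option maxHeartbeats 1000000 in
lemma ptwise {d : ℕ} {R : ℝ} (hR : 0 < R) {u : E d → ℝ}
    (hu : ContDiffOn ℝ 1 u (ball (0 : E d) R)) {f : E d → ℝ}
    (hf : f = (ball (0 : E d) R).indicator (fun z => ‖fderiv ℝ u z‖)) (hfm : Measurable f)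
    {x : E d} (hx : x ∈ ball (0 : E d) R) :
    ‖u x‖ₑ ≤ nLp 1 (ball 0 R) ((ball (0 : E d) R).indicator u) +
      ENNReal.ofReal (2 ^ d) * ∫⁻ s in Ioi 0, Aav (fun y => ENNReal.ofReal (f y)) x s := by
  set B := ball (0 : E d) R with hB
  set F : E d → ℝ≥0∞ := fun y => ENNReal.ofReal (f y) with hF
  have hFm : Measurable F := hfm.ennreal_ofReal
  set L := 2 * R with hL
  have hL0 : 0 < L := by positivity
  have hPm : Measurable (Function.uncurry fun (y : E d) (s : ℝ) => F (x + (s / L) • (y - x))) := by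
    apply hFm.comp
    fun_prop
  have h1 : ∫⁻ y in B, ‖u x‖ₑ ≤ ∫⁻ y in B, (‖u y‖ₑ + ∫⁻ s in Ioc 0 L, F (x + (s / L) • (y - x))) := by
    refine setLIntegral_mono' measurableSet_ball fun y hy => ?_
    have := line_est hR hu hx hy
    simpa [hF, hf] using this
  rw [lintegral_add_right _ (by exact hPm.lintegral_prod_right'), setLIntegral_const,
    lintegral_lintegral_swap (by exact hPm.aemeasurable)] at h1
  have h2 : ∀ s ∈ Ioc 0 L, ∫⁻ y in B, F (x + (s / L) • (y - x)) ≤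
      volume B * (ENNReal.ofReal (2 ^ d) * Aav F x s) := by
    intro s hs
    have hs0 : 0 < s := hs.1
    have hc : 0 < s / L := div_pos hs0 hL0
    have hHm : Measurable ((ball x s).indicator F) := hFm.indicator measurableSet_ball
    calc _ ≤ ∫⁻ y in B, (ball x s).indicator F (x + (s / L) • (y - x)) := by
          refine setLIntegral_mono' measurableSet_ball fun y hy => ?_
          rw [indicator_of_mem]
          rw [mem_ball, dist_self_add_left, norm_smul, Real.norm_of_nonneg hc.le]
          have : ‖y - x‖ < L := by
            rw [hB, mem_ball_zero_iff] at hx hy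
            linarith [norm_sub_le y x]
          calc _ < s / L * L := by gcongr
            _ = s := by field_simp
      _ ≤ ∫⁻ y, (ball x s).indicator F (x + (s / L) • (y - x)) :=
          lintegral_mono' Measure.restrict_le_self le_rfl
      _ = ENNReal.ofReal (((s / L) ^ d)⁻¹) * ∫⁻ y in ball x s, F y := by
          rw [dil_int hHm x hc, lintegral_indicator measurableSet_ball]
      _ = _ := by
          unfold Aav
          have hv : volume (ball (0 : E d) s) = ENNReal.ofReal ((s / R) ^ d) * volume B := by
            rw [← vol_ball_mul 0 0 (by positivity), div_mul_cancel₀ _ hR.ne']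
          rw [hv, ENNReal.mul_inv (Or.inr (vol_ball_top _ _)) (Or.inr (vol_ball_pos _ hR)),
            ← ENNReal.ofReal_inv_of_pos (by positivity)]
          have e : ((s / L) ^ d)⁻¹ = 2 ^ d * ((s / R) ^ d)⁻¹ := by
            rw [hL, ← inv_pow, ← inv_pow, ← mul_pow]
            congr 1
            field_simp
          rw [e, ENNReal.ofReal_mul (by positivity)]
          have e2 : volume B * (volume B)⁻¹ = 1 :=
            ENNReal.mul_inv_cancel (vol_ball_pos _ hR) (vol_ball_top _ _)
          calc _ = (volume B * (volume B)⁻¹) * (ENNReal.ofReal (2 ^ d) *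
                ENNReal.ofReal (((s / R) ^ d)⁻¹) * ∫⁻ y in ball x s, F y) := by rw [e2, one_mul]
            _ = _ := by ring
  have hAm : Measurable fun s => Aav F x s :=
    (meas_Aav hFm).comp (measurable_const.prodMk measurable_id)
  have h3 : ∫⁻ s in Ioc 0 L, ∫⁻ y in B, F (x + (s / L) • (y - x)) ≤
      volume B * (ENNReal.ofReal (2 ^ d) * ∫⁻ s in Ioi 0, Aav F x s) := by
    calc _ ≤ ∫⁻ s in Ioc 0 L, volume B * (ENNReal.ofReal (2 ^ d) * Aav F x s) :=
          setLIntegral_mono' measurableSet_Ioc h2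
      _ ≤ ∫⁻ s in Ioi 0, volume B * (ENNReal.ofReal (2 ^ d) * Aav F x s) :=
          lintegral_mono_set Ioc_subset_Ioi_self
      _ = _ := by
          rw [lintegral_const_mul _ (hAm.const_mul _), lintegral_const_mul _ hAm]
  have h4 : ∫⁻ y in B, ‖u y‖ₑ = volume B * nLp 1 B (B.indicator u) := by
    unfold nLp
    simp only [Real.rpow_one, ne_eq, one_ne_zero, not_false_eq_true, div_self, ENNReal.rpow_one]
    rw [← mul_assoc, ENNReal.mul_inv_cancel (vol_ball_pos _ hR) (vol_ball_top _ _), one_mul]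
    refine setLIntegral_congr_fun measurableSet_ball fun y hy => ?_
    rw [indicator_of_mem hy, ← Real.norm_eq_abs, ofReal_norm]
  have h5 := h1.trans (add_le_add h4.le h3)
  rw [← mul_add, mul_comm] at h5
  exact (ENNReal.mul_le_mul_iff_right (vol_ball_pos _ hR) (vol_ball_top _ _)).1 h5

lemma nLp_large {d : ℕ} {p ν L ρ : ℝ} (hp : 0 < p) (hν : ν ≤ d / p) (hL : 0 < L) (hLρ : L ≤ ρ)
    (x : E d) {g : E d → ℝ} (hg : ∀ y, y ∉ ball x L → g y = 0) :
    ENNReal.ofReal (ρ ^ ν) * nLp p (ball x ρ) g ≤ ENNReal.ofReal (L ^ ν) * nLp p (ball x L) g := by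
  have hρ : 0 < ρ := hL.trans_le hLρ
  have h1 : ∫⁻ y in ball x ρ, ENNReal.ofReal (|g y| ^ p) ≤
      ∫⁻ y in ball x L, ENNReal.ofReal (|g y| ^ p) := by
    rw [← lintegral_indicator (s := ball x L) measurableSet_ball]
    refine (lintegral_mono' Measure.restrict_le_self le_rfl).trans (lintegral_mono fun y => ?_)
    by_cases hy : y ∈ ball x L
    · rw [indicator_of_mem hy]
    · rw [indicator_of_notMem hy, hg y hy]
      simp [Real.zero_rpow hp.ne']
  have hv : (volume (ball x ρ))⁻¹ = ENNReal.ofReal ((L / ρ) ^ d) * (volume (ball x L))⁻¹ := by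
    have : volume (ball x ρ) = ENNReal.ofReal ((ρ / L) ^ d) * volume (ball x L) := by
      rw [← vol_ball_mul x x (by positivity), div_mul_cancel₀ _ hL.ne']
    rw [this, ENNReal.mul_inv (Or.inr (vol_ball_top _ _)) (Or.inr (vol_ball_pos _ hL)),
      ← ENNReal.ofReal_inv_of_pos (by positivity), ← inv_pow, inv_div]
  have h2 : nLp p (ball x ρ) g ≤ ENNReal.ofReal ((L / ρ) ^ ν) * nLp p (ball x L) g := by
    unfold nLp
    calc _ ≤ (ENNReal.ofReal ((L / ρ) ^ d) * ((volume (ball x L))⁻¹ *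
          ∫⁻ y in ball x L, ENNReal.ofReal (|g y| ^ p))) ^ (1 / p) := by
          rw [hv, mul_assoc]
          gcongr
      _ = ENNReal.ofReal ((L / ρ) ^ (d / p)) * ((volume (ball x L))⁻¹ *
          ∫⁻ y in ball x L, ENNReal.ofReal (|g y| ^ p)) ^ (1 / p) := by
          rw [ENNReal.mul_rpow_of_nonneg _ _ (by positivity),
            ENNReal.ofReal_rpow_of_nonneg (by positivity) (by positivity),
            ← Real.rpow_natCast, ← Real.rpow_mul (by positivity), mul_one_div]
      _ ≤ _ := by
          gcongr ENNReal.ofReal ?_ * _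
          exact Real.rpow_le_rpow_of_exponent_ge (by positivity) (div_le_one_of_le₀ hLρ hρ.le) hν
  calc _ ≤ ENNReal.ofReal (ρ ^ ν) * (ENNReal.ofReal ((L / ρ) ^ ν) * nLp p (ball x L) g) := by
        gcongr
    _ = _ := by
        rw [← mul_assoc, ← ENNReal.ofReal_mul (by positivity), ← Real.mul_rpow (by positivity)
          (by positivity), mul_div_cancel₀ _ hρ.ne']

lemma strong_final (d : ℕ) (p q : ℝ) (hp : 1 < p) (hpq : p < q) :
    ∃ C : ℝ, 0 < C ∧ ∀ (Ω : Set (E d)), MeasurableSet Ω → ∀ f : E d → ℝ, Measurable f →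
      (∀ y, 0 ≤ f y) → ∀ w : E d → ℝ, Measurable w → (∀ x, 0 ≤ w x) →
      (∀ x ∈ Ω, ENNReal.ofReal (w x) ≤
        ∫⁻ s in Ioi 0, Aav (fun y => ENNReal.ofReal (f y)) x s) →
      ∀ K : ℝ, 0 < K → (∀ x ∈ Ω, ∀ s : ℝ, 0 < s →
        nLp p (ball x s) f ≤ ENNReal.ofReal (K * s ^ (-(q / p)))) →
      ∀ x0 ∈ Ω, ∀ ρ : ℝ, 0 < ρ →
        nLp (p * q / (q - p)) (ball x0 ρ) (Ω.indicator w) ≤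
          ENNReal.ofReal (C * K * ρ ^ (1 - q / p)) := by
  have hp0 : 0 < p := by linarith
  have hqp : 0 < q - p := by linarith
  have hq0 : 0 < q := by linarith
  set m := p / (q - p) with hm
  have hm0 : 0 < m := by positivity
  have hQ : p * q / (q - p) = p * (1 + m) := by rw [hm]; field_simp; ring
  have hμ1 : 1 - q / p = -(1 / m) := by rw [hm]; field_simp; ring
  have hμ : 1 < q / p := by rw [one_lt_div hp0]; exact hpq
  have hq : q = p * (1 + m) / m := by rw [hm]; field_simp; ring
  set Q := p * (1 + m) with hQdef
  have hQ0 : 0 < Q := by positivity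
  have hp1 : 0 < p - 1 := by linarith
  set C0 := (2 * m) ^ Q + p * 4 ^ p * (2 * m) ^ (m * p) / (p - 1) * 2 ^ d * 2 ^ (-q) with hC0
  have hC00 : 0 < C0 := by positivity
  refine ⟨C0 ^ (1 / Q), by positivity, ?_⟩
  intro Ω hΩ f hf hf0 w hw hw0 hwV K hK hM x0 hx0 ρ hρ
  set κ := (2 * m * K) ^ m with hκ
  have hκ0 : 0 < κ := by positivity
  set l0 := 2 * m * K * ρ ^ (-(1 / m)) with hl0
  have hl00 : 0 < l0 := by positivity
  have hmain := strong_est hf hf0 hΩ hw hw0 hwV (m := m) (κ := κ) (p := p) (ρ := ρ) (l0 := l0)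
    hm0 hκ0 hp hρ hl00 ?_ ?_ x0
  · rw [← hQdef] at hmain
    have hint : ∫⁻ y in ball x0 (2 * ρ), ENNReal.ofReal (f y ^ p) ≤
        ENNReal.ofReal (K ^ p * (2 * ρ) ^ (-q)) * (ENNReal.ofReal (2 ^ d) * volume (ball x0 ρ)) := by
      have h := hM x0 hx0 (2 * ρ) (by positivity)
      unfold nLp at h
      have h' := ENNReal.rpow_le_rpow h hp0.le
      rw [← ENNReal.rpow_mul, one_div_mul_cancel hp0.ne', ENNReal.rpow_one,
        ENNReal.ofReal_rpow_of_nonneg (by positivity) hp0.le, Real.mul_rpow hK.le (by positivity),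
        ← Real.rpow_mul (by positivity), show -(q / p) * p = -q by field_simp,
        ENNReal.inv_mul_le_iff (vol_ball_pos _ (by positivity)) (vol_ball_top _ _),
        vol_ball_mul x0 x0 (by norm_num : (0:ℝ) < 2),
        mul_comm (ENNReal.ofReal (2 ^ d) * _)] at h'
      refine le_trans (le_of_eq ?_) h'
      refine lintegral_congr fun y => ?_
      rw [abs_of_nonneg (hf0 y)]
    have htot : ∫⁻ x in ball x0 ρ ∩ Ω, ENNReal.ofReal (w x ^ Q) ≤
        volume (ball x0 ρ) * ENNReal.ofReal (C0 * K ^ Q * ρ ^ (-q)) := by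
      refine hmain.trans ((add_le_add le_rfl (mul_le_mul_right hint _)).trans (le_of_eq ?_))
      have e : C0 * K ^ Q * ρ ^ (-q) = l0 ^ Q +
          p * (4 * κ) ^ p / (p - 1) * ((K ^ p * (2 * ρ) ^ (-q)) * 2 ^ d) := by
        have e1 : l0 ^ Q = (2 * m) ^ Q * K ^ Q * ρ ^ (-q) := by
          rw [hl0, Real.mul_rpow (by positivity) (by positivity),
            Real.mul_rpow (by positivity) (by positivity), ← Real.rpow_mul hρ.le]
          congr 2
          rw [hq]; ring
        have e2 : (4 * κ) ^ p = 4 ^ p * ((2 * m) ^ (m * p) * K ^ (m * p)) := by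
          rw [Real.mul_rpow (by positivity) (by positivity), hκ, ← Real.rpow_mul (by positivity),
            Real.mul_rpow (by positivity) (by positivity)]
        have e3 : K ^ Q = K ^ (m * p) * K ^ p := by
          rw [← Real.rpow_add hK, hQdef]; congr 1; ring
        have e4 : (2 * ρ) ^ (-q) = 2 ^ (-q) * ρ ^ (-q) :=
          Real.mul_rpow (by positivity) (by positivity)
        rw [e1, e2, e4, hC0, add_mul, add_mul]
        congr 1
        rw [e3]
        ring
      rw [e, ENNReal.ofReal_add (by positivity) (by positivity), mul_add, mul_comm (volume _),
        ENNReal.ofReal_mul (p := p * (4 * κ) ^ p / (p - 1)) (by positivity),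
        ENNReal.ofReal_mul (p := K ^ p * (2 * ρ) ^ (-q)) (by positivity)]
      ring
    rw [hQ]
    unfold nLp
    have hind : ∫⁻ y in ball x0 ρ, ENNReal.ofReal (|Ω.indicator w y| ^ Q) =
        ∫⁻ x in ball x0 ρ ∩ Ω, ENNReal.ofReal (w x ^ Q) := by
      rw [inter_comm, ← Measure.restrict_restrict hΩ, ← lintegral_indicator hΩ]
      refine lintegral_congr fun y => ?_
      by_cases hy : y ∈ Ω
      · simp [hy, abs_of_nonneg (hw0 y)]
      · simp [hy, Real.zero_rpow hQ0.ne']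
    rw [hind]
    calc _ ≤ (ENNReal.ofReal (C0 * K ^ Q * ρ ^ (-q))) ^ (1 / Q) := by
          gcongr
          rw [ENNReal.inv_mul_le_iff (vol_ball_pos _ hρ) (vol_ball_top _ _)]
          exact htot
      _ = _ := by
          rw [ENNReal.ofReal_rpow_of_nonneg (by positivity) (by positivity),
            Real.mul_rpow (by positivity) (by positivity),
            Real.mul_rpow (by positivity) (by positivity), ← Real.rpow_mul hK.le,
            ← Real.rpow_mul hρ.le, mul_one_div_cancel hQ0.ne', Real.rpow_one, hμ1]
          congr 3
          rw [hq]
          field_simp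
  · intro t ht
    calc κ * t ^ (-m) ≤ κ * l0 ^ (-m) := by
          gcongr ?_ * ?_
          exact Real.rpow_le_rpow_of_nonpos hl00 ht (by linarith)
      _ = ρ := by
          rw [hl0, hκ, Real.mul_rpow (x := 2 * m * K) (y := ρ ^ (-(1 / m))) (by positivity)
            (by positivity), ← Real.rpow_mul hρ.le,
            ← mul_assoc, ← Real.rpow_add (by positivity)]
          rw [show -(1 / m) * -m = 1 by field_simp]
          simp
  · intro t ht x hx
    have hr : 0 < κ * t ^ (-m) := by positivity
    have hA : ∀ s, 0 < s → Aav (fun y => ENNReal.ofReal (f y)) x s ≤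
        ENNReal.ofReal (K * s ^ (-(q / p))) := by
      intro s hs
      rw [Aav_eq_nLp x s hf0]
      exact (nLp_mono_exp one_pos hp.le x hs hf).trans (hM x hx s hs)
    refine (tail_le hμ hK hr hA).trans (ENNReal.ofReal_le_ofReal (le_of_eq ?_))
    have e : (κ * t ^ (-m)) ^ (1 - q / p) = (2 * m * K)⁻¹ * t := by
      rw [hμ1, hκ, Real.mul_rpow (by positivity) (by positivity), ← Real.rpow_mul (by positivity),
        ← Real.rpow_mul ht.le, show -m * -(1 / m) = 1 by field_simp,
        show m * -(1 / m) = -1 by field_simp, Real.rpow_one, Real.rpow_neg_one]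
    have e' : q / p - 1 = 1 / m := by linarith
    rw [e, e']
    field_simp

lemma core_est {d : ℕ} {p q C R : ℝ} (hp : 1 < p) (hpq : p < q) (hC : 0 < C) (hR : 0 < R)
    (HC : ∀ (Ω : Set (E d)), MeasurableSet Ω → ∀ f : E d → ℝ, Measurable f →
      (∀ y, 0 ≤ f y) → ∀ w : E d → ℝ, Measurable w → (∀ x, 0 ≤ w x) →
      (∀ x ∈ Ω, ENNReal.ofReal (w x) ≤
        ∫⁻ s in Ioi 0, Aav (fun y => ENNReal.ofReal (f y)) x s) →
      ∀ K : ℝ, 0 < K → (∀ x ∈ Ω, ∀ s : ℝ, 0 < s →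
        nLp p (ball x s) f ≤ ENNReal.ofReal (K * s ^ (-(q / p)))) →
      ∀ x0 ∈ Ω, ∀ ρ : ℝ, 0 < ρ →
        nLp (p * q / (q - p)) (ball x0 ρ) (Ω.indicator w) ≤
          ENNReal.ofReal (C * K * ρ ^ (1 - q / p)))
    {u : E d → ℝ} (hu : ContDiffOn ℝ 1 u (ball (0 : E d) R)) {K U : ℝ} (hK : 0 < K) (hU : 0 ≤ U)
    (hDK : morrey p (q / p) (ball (0 : E d) R) (fun x => ‖fderiv ℝ u x‖) ≤ ENNReal.ofReal K)
    (hUU : morrey p (q / p) (ball (0 : E d) R) u ≤ ENNReal.ofReal U)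
    {x0 : E d} (hx0 : x0 ∈ ball (0 : E d) R) {ρ : ℝ} (hρ : 0 < ρ) (hρR : ρ ≤ 2 * R)
    {p' : ℝ} (hp' : p' ∈ Set.Icc 1 (p * q / (q - p))) :
    ENNReal.ofReal (ρ ^ (q / p - 1)) *
      nLp p' (ball x0 ρ) ((ball (0 : E d) R).indicator u) ≤
      ENNReal.ofReal (2 ^ d * C * K + 2 ^ (q / p - 1) * R⁻¹ * U) := by
  set B := ball (0 : E d) R with hB
  classical
  have hBm : MeasurableSet B := measurableSet_ball
  have hp0 : 0 < p := by linarith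
  set v : E d → ℝ := B.indicator u with hv
  set f : E d → ℝ := B.indicator (fun z => ‖fderiv ℝ u z‖) with hf
  have hμ : 0 < q / p - 1 := by
    have : 1 < q / p := by rw [one_lt_div hp0]; exact hpq
    linarith
  have hvm : Measurable v := by
    have := hu.continuousOn.measurable_piecewise (g := (0 : E d → ℝ))
      continuous_zero.continuousOn hBm
    rwa [piecewise_eq_indicator] at this
  have hfm : Measurable f := by
    have hc : ContinuousOn (fun z => ‖fderiv ℝ u z‖) B :=
      (hu.continuousOn_fderiv_of_isOpen isOpen_ball le_rfl).norm
    have := hc.measurable_piecewise (g := (0 : E d → ℝ)) continuous_zero.continuousOn hBm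
    rwa [piecewise_eq_indicator] at this
  have hf0 : ∀ y, 0 ≤ f y := fun y => indicator_nonneg (fun _ _ => norm_nonneg _) y
  have hmor : ∀ (g : E d → ℝ) (T : ℝ), 0 ≤ T → morrey p (q / p) B g ≤ ENNReal.ofReal T →
      ∀ x ∈ B, ∀ s : ℝ, 0 < s →
      nLp p (ball x s) (B.indicator g) ≤ ENNReal.ofReal (T * s ^ (-(q / p))) := by
    intro g T hT hg x hx s hs
    have h1 : ENNReal.ofReal (s ^ (q / p)) * nLp p (ball x s) (B.indicator g) ≤
        ENNReal.ofReal T := by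
      refine le_trans ?_ hg
      unfold morrey
      exact le_iSup₂_of_le s hs (le_iSup₂_of_le x hx le_rfl)
    have hpos : 0 < s ^ (q / p) := by positivity
    rw [Real.rpow_neg hs.le, ← div_eq_mul_inv, ENNReal.ofReal_div_of_pos hpos,
      ENNReal.le_div_iff_mul_le (Or.inl (by simpa using hpos)) (Or.inl (by simp)), mul_comm]
    exact h1
  have h0B : (0 : E d) ∈ B := mem_ball_self hR
  set c : ℝ := U * R ^ (-(q / p)) with hc
  have hc0 : 0 ≤ c := by positivity
  have havg : nLp 1 B v ≤ ENNReal.ofReal c :=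
    (nLp_mono_exp one_pos hp.le 0 hR hvm).trans (hmor u U hU hUU 0 h0B R hR)
  let w : E d → ℝ := fun x => max (|v x| - c) 0 / 2 ^ d
  have hwm : Measurable w := by
    have : Measurable fun x => |v x| := by simpa [Real.norm_eq_abs] using hvm.norm
    exact ((this.sub_const c).max measurable_const).div_const _
  have hw0 : ∀ x, 0 ≤ w x := fun x => div_nonneg (le_max_right _ _) (by positivity)
  have hwV : ∀ x ∈ B, ENNReal.ofReal (w x) ≤
      ∫⁻ s in Ioi 0, Aav (fun y => ENNReal.ofReal (f y)) x s := by
    intro x hx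
    have h1 := ptwise hR hu hf hfm hx
    have h2 := h1.trans (add_le_add havg le_rfl)
    have e : ‖u x‖ₑ = ENNReal.ofReal |v x| := by
      rw [hv, indicator_of_mem hx, ← Real.norm_eq_abs, ofReal_norm]
    rw [e] at h2
    have h3 := tsub_le_iff_left.2 h2
    rw [← ENNReal.ofReal_sub _ hc0] at h3
    have h4 : ENNReal.ofReal (w x) = ENNReal.ofReal (|v x| - c) / ENNReal.ofReal (2 ^ d) := by
      rw [← ENNReal.ofReal_div_of_pos (by positivity)]
      simp only [w]
      rcases le_total (|v x| - c) 0 with h | h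
      · rw [max_eq_right h, zero_div, ENNReal.ofReal_zero, eq_comm, ENNReal.ofReal_eq_zero]
        exact div_nonpos_of_nonpos_of_nonneg h (by positivity)
      · rw [max_eq_left h]
    rw [h4]
    exact ENNReal.div_le_of_le_mul' h3
  have hW := HC B hBm f hfm hf0 w hwm hw0 hwV K hK
    (hmor _ K hK.le hDK) x0 hx0 ρ hρ
  set Q := p * q / (q - p) with hQ
  have hQ1 : 1 ≤ Q := hp'.1.trans hp'.2
  have hprob := avm_prob x0 hρ
  have hsum : nLp Q (ball x0 ρ) v ≤ ENNReal.ofReal c +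
      ENNReal.ofReal (2 ^ d) * nLp Q (ball x0 ρ) (B.indicator w) := by
    rw [nLp_eq (by linarith), nLp_eq (by linarith)]
    have hQ1' : 1 ≤ ENNReal.ofReal Q := by simpa using hQ1
    have hQne : ENNReal.ofReal Q ≠ 0 := (zero_lt_one.trans_le hQ1').ne'
    have hwB : Measurable (B.indicator w) := hwm.indicator hBm
    calc _ ≤ eLpNorm ((fun _ => c) + (2 ^ d : ℝ) • B.indicator w) (ENNReal.ofReal Q)
          (avm (ball x0 ρ)) := by
          apply eLpNorm_mono_real
          intro x
          simp only [Pi.add_apply, Pi.smul_apply, smul_eq_mul, Real.norm_eq_abs]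
          by_cases hx : x ∈ B
          · rw [indicator_of_mem hx]
            have : (2 ^ d : ℝ) * w x = max (|v x| - c) 0 := by
              simp only [w]; field_simp
            rw [this]
            linarith [le_max_left (|v x| - c) 0]
          · rw [indicator_of_notMem hx, hv, indicator_of_notMem hx]
            simpa using hc0
      _ ≤ eLpNorm (fun _ => c) (ENNReal.ofReal Q) (avm (ball x0 ρ)) +
          eLpNorm ((2 ^ d : ℝ) • B.indicator w) (ENNReal.ofReal Q) (avm (ball x0 ρ)) :=
          eLpNorm_add_le measurable_const.aestronglyMeasurable
            (hwB.const_smul (2 ^ d : ℝ)).aestronglyMeasurable hQ1'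
      _ = _ := by
          rw [eLpNorm_const _ hQne (IsProbabilityMeasure.ne_zero _), measure_univ,
            ENNReal.one_rpow, mul_one, eLpNorm_const_smul, ← ofReal_norm, ← ofReal_norm,
            Real.norm_of_nonneg hc0, Real.norm_of_nonneg (by positivity)]
  have hfin : nLp p' (ball x0 ρ) v ≤ ENNReal.ofReal (c + 2 ^ d * (C * K * ρ ^ (1 - q / p))) := by
    refine (nLp_mono_exp (by linarith [hp'.1]) hp'.2 x0 hρ hvm).trans (hsum.trans ?_)
    rw [ENNReal.ofReal_add hc0 (by positivity),
      ENNReal.ofReal_mul (p := (2 : ℝ) ^ d) (by positivity)]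
    gcongr
  calc _ ≤ ENNReal.ofReal (ρ ^ (q / p - 1)) *
        ENNReal.ofReal (c + 2 ^ d * (C * K * ρ ^ (1 - q / p))) := by gcongr
    _ = ENNReal.ofReal (ρ ^ (q / p - 1) * (c + 2 ^ d * (C * K * ρ ^ (1 - q / p)))) := by
        rw [ENNReal.ofReal_mul (by positivity)]
    _ ≤ _ := by
        apply ENNReal.ofReal_le_ofReal
        have e1 : ρ ^ (q / p - 1) * ρ ^ (1 - q / p) = 1 := by
          rw [← Real.rpow_add hρ]; simp
        have e2 : ρ ^ (q / p - 1) * c ≤ 2 ^ (q / p - 1) * R⁻¹ * U := by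
          calc ρ ^ (q / p - 1) * c ≤ (2 * R) ^ (q / p - 1) * c := by gcongr
            _ = 2 ^ (q / p - 1) * (R ^ (q / p - 1) * R ^ (-(q / p))) * U := by
              rw [hc, Real.mul_rpow (by positivity) hR.le]; ring
            _ = _ := by
              rw [← Real.rpow_add hR, show q / p - 1 + -(q / p) = -1 by ring, Real.rpow_neg_one]
        calc _ = ρ ^ (q / p - 1) * c + 2 ^ d * C * K * (ρ ^ (q / p - 1) * ρ ^ (1 - q / p)) := by
              ring
          _ ≤ _ := by rw [e1]; linarith

/-- Lemma 4.7 of the paper: Morrey-space embedding based on Adams' theorem. -/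
theorem stmt_11 (d : ℕ) (hd : 1 ≤ d) (p q : ℝ)
    (hp : 1 < p) (hpq : p < q) (hqd : q < d) :
    ∃ N : ℝ, 0 < N ∧
      ∀ R : ℝ, 0 < R →
        ∀ p' : ℝ, p' ∈ Set.Icc 1 (p * q / (q - p)) →
          ∀ u : E d → ℝ, ContDiffOn ℝ 1 u (closedBall (0 : E d) R) →
            morrey p' (q / p - 1) (ball (0 : E d) R) u ≤
              ENNReal.ofReal N *
                  morrey p (q / p) (ball (0 : E d) R) (fun x => ‖fderiv ℝ u x‖) +
                ENNReal.ofReal (N * R⁻¹) * morrey p (q / p) (ball (0 : E d) R) u := by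
  obtain ⟨C, hC, HC⟩ := strong_final d p q hp hpq
  have hp0 : 0 < p := by linarith
  have hqp : 0 < q - p := by linarith
  refine ⟨2 ^ d * C + 2 ^ (q / p - 1), by positivity, ?_⟩
  set N : ℝ := 2 ^ d * C + 2 ^ (q / p - 1) with hN
  have hN0 : 0 < N := by positivity
  intro R hR p' hp' u hu
  have hp'0 : 0 < p' := by linarith [hp'.1]
  set D := morrey p (q / p) (ball (0 : E d) R) (fun x => ‖fderiv ℝ u x‖) with hD
  set U := morrey p (q / p) (ball (0 : E d) R) u with hU
  by_cases hDt : D = ⊤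
  · rw [hDt, ENNReal.mul_top (by simpa using hN0)]
    simp
  by_cases hUt : U = ⊤
  · rw [hUt, ENNReal.mul_top]
    · simp
    · have : 0 < N * R⁻¹ := by positivity
      simpa using this
  have hu' : ContDiffOn ℝ 1 u (ball (0 : E d) R) := hu.mono ball_subset_closedBall
  -- the estimate on small balls
  have hsmall : ∀ x0 ∈ ball (0 : E d) R, ∀ ρ : ℝ, 0 < ρ → ρ ≤ 2 * R →
      ENNReal.ofReal (ρ ^ (q / p - 1)) *
        nLp p' (ball x0 ρ) ((ball (0 : E d) R).indicator u) ≤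
      ENNReal.ofReal N * D + ENNReal.ofReal (N * R⁻¹) * U := by
    intro x0 hx0 ρ hρ hρR
    apply ENNReal.le_of_forall_pos_le_add
    intro ε hε _
    set δ : ℝ := ε / N with hδ
    have hε' : (0:ℝ) < ε := hε
    have hδ0 : 0 < δ := by positivity
    have h1 := core_est hp hpq hC hR HC hu' (K := D.toReal + δ) (U := U.toReal)
      (by positivity) (by positivity)
      (by rw [ENNReal.ofReal_add (by positivity) hδ0.le, ENNReal.ofReal_toReal hDt]
          exact le_self_add)
      (by rw [ENNReal.ofReal_toReal hUt]) hx0 hρ hρR hp'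
    refine h1.trans ?_
    calc _ ≤ ENNReal.ofReal (N * D.toReal + (N * R⁻¹) * U.toReal + ε) := by
          apply ENNReal.ofReal_le_ofReal
          have e1 : N * δ = ε := by rw [hδ]; field_simp
          have a1 : 2 ^ d * C ≤ N := by
            have : (0:ℝ) < 2 ^ (q / p - 1) := by positivity
            linarith
          have a2 : 2 ^ (q / p - 1) ≤ N := by
            have : (0:ℝ) < 2 ^ d * C := by positivity
            linarith
          calc _ ≤ N * (D.toReal + δ) + N * R⁻¹ * U.toReal := by gcongr
            _ = _ := by rw [mul_add, e1]; ring
      _ = _ := by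
          rw [ENNReal.ofReal_add (by positivity) hε'.le, ENNReal.ofReal_add (by positivity)
            (by positivity), ENNReal.ofReal_mul hN0.le, ENNReal.ofReal_mul (p := N * R⁻¹)
            (by positivity), ENNReal.ofReal_toReal hDt, ENNReal.ofReal_toReal hUt,
            ENNReal.ofReal_coe_nnreal]
  unfold morrey
  refine iSup₂_le fun ρ hρ => iSup₂_le fun x0 hx0 => ?_
  by_cases hρR : ρ ≤ 2 * R
  · exact hsmall x0 hx0 ρ hρ hρR
  · refine le_trans (nLp_large hp'0 ?_ (by positivity : 0 < 2 * R) (not_le.1 hρR).le x0 ?_)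
      (hsmall x0 hx0 (2 * R) (by positivity) le_rfl)
    · have h1 : q / p - 1 = q / (p * q / (q - p)) := by
        have : q ≠ 0 := by linarith
        field_simp
      have hQ : 0 < p * q / (q - p) := by linarith [hp'.2]
      rw [h1]
      have : 0 < q := by linarith
      calc q / (p * q / (q - p)) ≤ q / p' := by
            gcongr
            exact hp'.2
        _ ≤ _ := by gcongr
    · intro y hy
      rw [indicator_of_notMem]
      intro hyB
      apply hy
      rw [mem_ball_zero_iff] at hyB hx0
      rw [mem_ball, dist_eq_norm]
      linarith [norm_sub_le y x0]
end
end

section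
/- Let d ≥ 1 be an integer, δ ∈ (0,1], p ∈ (d/2,∞), R ∈ (0,∞). Let Ĥ(m,x) (m a symmetric d×d matrix, x ∈ B_R) be δ-elliptic, measurable in x for each fixed m, with Ĥ(0,·) ∈ L_p on compact subsets of B_R, and let f be in L_p on compact subsets of B_R. Let u be twice continuously differentiable on B_R. Suppose there exists a constant N such that for every ball B_r(x₀) with closure contained in B_R and every φ twice continuously differentiable on B̄_r(x₀), the inequality u(x) ≤ φ(x) + sup_{∂B_r(x₀)} (u − φ)₊ + N r² (⨍_{B_r(x₀)} ((f(y) − Ĥ(D²φ(y),y))₋)^p dy)^{1/p} holds for all x ∈ B_r(x₀). Then Ĥ(D²u(x),x) ≥ f(x) for almost every x ∈ B_R. -/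
open MeasureTheory Metric Set Filter
open scoped ENNReal RealInnerProductSpace

noncomputable section

open Topology

theorem aux_qf_bound {d : ℕ} (e : Matrix (Fin d) (Fin d) ℝ) (η : ℝ)
    (he : ∀ i j, |e i j| ≤ η) (v : Fin d → ℝ) :
    |∑ i, ∑ j, e i j * v i * v j| ≤ η * d * ∑ i, v i ^ 2 := by
  have h1 : |∑ i, ∑ j, e i j * v i * v j| ≤ ∑ i, ∑ j, η * ((v i ^ 2 + v j ^ 2) / 2) := by
    refine (Finset.abs_sum_le_sum_abs _ _).trans (Finset.sum_le_sum fun i _ => ?_)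
    refine (Finset.abs_sum_le_sum_abs _ _).trans (Finset.sum_le_sum fun j _ => ?_)
    rw [mul_assoc, abs_mul]
    have h2 : |v i * v j| ≤ (v i ^ 2 + v j ^ 2) / 2 := by
      rw [abs_le]; constructor <;> nlinarith [sq_nonneg (v i - v j), sq_nonneg (v i + v j)]
    exact mul_le_mul (he i j) h2 (abs_nonneg _) ((abs_nonneg _).trans (he i j))
  refine h1.trans (le_of_eq ?_)
  simp only [← Finset.mul_sum, ← Finset.sum_div, Finset.sum_add_distrib, Finset.sum_const,
    Finset.card_univ, Fintype.card_fin, nsmul_eq_mul]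
  ring

theorem aux_qf_diag {d : ℕ} (e : Matrix (Fin d) (Fin d) ℝ) (t : ℝ) (v : Fin d → ℝ) :
    ∑ i, ∑ j, (e + t • (1 : Matrix (Fin d) (Fin d) ℝ)) i j * v i * v j
      = (∑ i, ∑ j, e i j * v i * v j) + t * ∑ i, v i ^ 2 := by
  simp only [Matrix.add_apply, Matrix.smul_apply, add_mul, Finset.sum_add_distrib, smul_eq_mul]
  congr 1
  rw [Finset.mul_sum]
  refine Finset.sum_congr rfl fun i _ => ?_
  rw [Finset.sum_eq_single i]
  · simp; ring
  · intro j _ hj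
    simp [Matrix.one_apply_ne hj.symm]
  · simp

theorem aux_psd {d : ℕ} (e : Matrix (Fin d) (Fin d) ℝ) (hs : e.IsSymm) (η t : ℝ)
    (he : ∀ i j, |e i j| ≤ η) (ht : η * d ≤ t) :
    (e + t • (1 : Matrix (Fin d) (Fin d) ℝ)).PosSemidef := by
  refine Matrix.PosSemidef.of_dotProduct_mulVec_nonneg ?_ ?_
  · rw [Matrix.IsHermitian, Matrix.conjTranspose_eq_transpose_of_trivial]
    rw [Matrix.transpose_add, hs.eq, Matrix.transpose_smul, Matrix.transpose_one]
  · intro v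
    have h1 : star v ⬝ᵥ ((e + t • (1 : Matrix (Fin d) (Fin d) ℝ)).mulVec v)
        = ∑ i, ∑ j, (e + t • (1 : Matrix (Fin d) (Fin d) ℝ)) i j * v i * v j := by
      simp only [dotProduct, Matrix.mulVec, Finset.mul_sum, star_trivial, Pi.star_apply]
      refine Finset.sum_congr rfl fun i _ => Finset.sum_congr rfl fun j _ => ?_
      ring
    rw [h1, aux_qf_diag]
    have h2 := aux_qf_bound e η he v
    have h3 : 0 ≤ ∑ i, v i ^ 2 := Finset.sum_nonneg fun i _ => sq_nonneg _
    have := (abs_le.1 h2).1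
    nlinarith

theorem aux_trace {d : ℕ} (e : Matrix (Fin d) (Fin d) ℝ) (η t : ℝ)
    (he : ∀ i j, |e i j| ≤ η) :
    (e + t • (1 : Matrix (Fin d) (Fin d) ℝ)).trace ≤ d * (η + t) := by
  rw [Matrix.trace_add, Matrix.trace_smul, Matrix.trace_one]
  have : e.trace ≤ ∑ i : Fin d, η := Finset.sum_le_sum fun i _ => (abs_le.1 (he i i)).2
  simp at this ⊢
  linarith

theorem aux_H_bound {d : ℕ} {δ : ℝ} (hδ : 0 < δ) (m : Matrix (Fin d) (Fin d) ℝ)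
    (hm : m.IsSymm) :
    ∃ C : ℝ, 0 ≤ C ∧ ∀ F : Matrix (Fin d) (Fin d) ℝ → ℝ, Elliptic δ F → |F m| ≤ |F 0| + C := by
  set η : ℝ := ∑ i, ∑ j, |m i j| with hη
  have hη0 : 0 ≤ η := Finset.sum_nonneg fun i _ => Finset.sum_nonneg fun j _ => abs_nonneg _
  have he : ∀ i j, |m i j| ≤ η := fun i j =>
    (Finset.single_le_sum (f := fun j => |m i j|) (fun j _ => abs_nonneg _)
      (Finset.mem_univ j)).trans
    (Finset.single_le_sum (f := fun i => ∑ j, |m i j|)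
      (fun i _ => Finset.sum_nonneg fun j _ => abs_nonneg _) (Finset.mem_univ i))
  have hdi : 0 < δ⁻¹ := inv_pos.2 hδ
  set K : ℝ := η * d with hK
  have hK0 : 0 ≤ K := by positivity
  refine ⟨δ⁻¹ * (d * (η + K)) + δ⁻¹ * (d * (0 + K)), by positivity, fun F hF => ?_⟩
  have p1 := aux_psd m hm η K he le_rfl
  have p2 := aux_psd (0 : Matrix (Fin d) (Fin d) ℝ) (by simp [Matrix.IsSymm]) 0 K (by simp)
    (by simpa using hK0)
  have t1 := aux_trace m η K he
  have t2 := aux_trace (0 : Matrix (Fin d) (Fin d) ℝ) 0 K (by simp)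
  have s0 : (-(K • (1 : Matrix (Fin d) (Fin d) ℝ))).IsSymm := by
    simp [Matrix.IsSymm]
  obtain ⟨a1, b1⟩ := hF _ s0 _ p1
  obtain ⟨a2, b2⟩ := hF _ s0 _ p2
  rw [show -(K • (1 : Matrix (Fin d) (Fin d) ℝ)) + (m + K • 1) = m by abel] at a1 b1
  rw [show -(K • (1 : Matrix (Fin d) (Fin d) ℝ)) + (0 + K • 1) = 0 by abel] at a2 b2
  have n1 := mul_nonneg hδ.le p1.trace_nonneg
  have n2 := mul_nonneg hδ.le p2.trace_nonneg
  have u1 := mul_le_mul_of_nonneg_left t1 hdi.le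
  have u2 := mul_le_mul_of_nonneg_left t2 hdi.le
  rcases abs_cases (F m) with h | h <;> rcases abs_cases (F 0) with hb2 | hb2 <;> 
    linarith

theorem aux_hess_quad {d : ℕ} (m : Matrix (Fin d) (Fin d) ℝ) (hm : m.IsSymm) (a : ℝ)
    (L : E d →L[ℝ] ℝ) (x : E d) :
    ContDiff ℝ 2 (fun y : E d => a + L (y - x) +
        (1 / 2) * ∑ i, ∑ j, m i j * (y - x) i * (y - x) j) ∧
    ∀ y, hess (fun y : E d => a + L (y - x) +
        (1 / 2) * ∑ i, ∑ j, m i j * (y - x) i * (y - x) j) y = m := by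
  constructor
  · fun_prop
  let B : E d →L[ℝ] E d →L[ℝ] ℝ := ∑ i, ∑ j, m i j •
    (EuclideanSpace.proj i : E d →L[ℝ] ℝ).smulRight (EuclideanSpace.proj j : E d →L[ℝ] ℝ)
  have hB : ∀ h k, B h k = ∑ i, ∑ j, m i j * h i * k j := by
    intro h k
    simp [B, ContinuousLinearMap.sum_apply, mul_assoc]
  have hBs : ∀ h k, B h k = B k h := by
    intro h k
    rw [hB, hB, Finset.sum_comm]
    refine Finset.sum_congr rfl fun i _ => Finset.sum_congr rfl fun j _ => ?_
    rw [hm.apply]; ring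
  have hd1 : ∀ y, HasFDerivAt (fun y : E d => a + L (y - x) +
        (1 / 2) * ∑ i, ∑ j, m i j * (y - x) i * (y - x) j) (L + B (y - x)) y := by
    intro y
    simp only [← hB]
    have h0 : HasFDerivAt (fun y : E d => y - x) (ContinuousLinearMap.id ℝ (E d)) y :=
      (hasFDerivAt_id y).sub_const x
    have h1 := B.hasFDerivAt_of_bilinear h0 h0
    have h2 := ((L.hasFDerivAt.comp y h0).const_add a).add (h1.const_mul (1 / 2))
    refine h2.congr_fderiv ?_
    ext k
    have hk := hBs k (y - x)
    simp at hk ⊢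
    linarith
  intro y
  ext i j
  simp only [hess, Matrix.of_apply]
  have e1 : (fun z => (fderiv ℝ (fun y : E d => a + L (y - x) +
        (1 / 2) * ∑ i, ∑ j, m i j * (y - x) i * (y - x) j) z) (EuclideanSpace.single j 1))
      = fun z => L (EuclideanSpace.single j 1) + B.flip (EuclideanSpace.single j 1) (z - x) := by
    funext z
    rw [(hd1 z).fderiv]; simp
  rw [e1]
  have h0 : HasFDerivAt (fun y : E d => y - x) (ContinuousLinearMap.id ℝ (E d)) y :=
      (hasFDerivAt_id y).sub_const x
  have h2 := (((B.flip (EuclideanSpace.single j 1)).hasFDerivAt.comp y h0).const_add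
    (L (EuclideanSpace.single j 1)))
  have h3 := h2.fderiv
  simp only [Function.comp_def] at h3
  rw [h3]
  simp [hB]

/-- second order upper Taylor bound -/
theorem aux_taylor {d : ℕ} (u : E d → ℝ) (x : E d) (hu : ContDiffAt ℝ 2 u x)
    (m : Matrix (Fin d) (Fin d) ℝ) (t : ℝ) (ht : 0 < t)
    (hm : ∀ h : E d, ∑ i, ∑ j, hess u x i j * h i * h j + t * ‖h‖ ^ 2
      ≤ ∑ i, ∑ j, m i j * h i * h j) :
    (hess u x).IsSymm ∧
    ∃ ρ > 0, ∀ y ∈ ball x ρ, u y ≤ u x + fderiv ℝ u x (y - x) +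
        (1 / 2) * ∑ i, ∑ j, m i j * (y - x) i * (y - x) j - t / 4 * ‖y - x‖ ^ 2 := by
  have hD : DifferentiableAt ℝ (fderiv ℝ u) x :=
    (hu.fderiv_right (m := 1) (by norm_num)).differentiableAt (by norm_num)
  set U := fderiv ℝ (fderiv ℝ u) x with hU
  have hh : ∀ i j, hess u x i j = U (EuclideanSpace.single i 1) (EuclideanSpace.single j 1) := by
    intro i j
    simp only [hess, Matrix.of_apply]
    have := (hD.hasFDerivAt.clm_apply (hasFDerivAt_const (EuclideanSpace.single j (1:ℝ)) x)).fderiv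
    rw [this]; simp [hU]
  constructor
  · have hs := hu.isSymmSndFDerivAt (by simp)
    ext i j
    rw [Matrix.transpose_apply, hh, hh]
    exact hs _ _
  have hUh : ∀ h : E d, U h h = ∑ i, ∑ j, hess u x i j * h i * h j := by
    intro h
    have e : h = ∑ i, h i • EuclideanSpace.single i (1:ℝ) := by
      simpa using ((EuclideanSpace.basisFun (Fin d) ℝ).sum_repr h).symm
    conv_lhs => rw [e]
    simp only [map_sum, ContinuousLinearMap.sum_apply, map_smul, smul_eq_mul,
      ContinuousLinearMap.smul_apply, Finset.mul_sum, hh]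
    rw [Finset.sum_comm]
    refine Finset.sum_congr rfl fun i _ => Finset.sum_congr rfl fun j _ => ?_
    ring
  have hlo := (hasFDerivAt_iff_isLittleO.1 hD.hasFDerivAt).def (half_pos ht)
  have hdiff : ∀ᶠ y in 𝓝 x, DifferentiableAt ℝ u y :=
    (hu.eventually (by simp)).mono fun y hy => hy.differentiableAt (by norm_num)
  obtain ⟨ρ, hρ, hb⟩ := Metric.eventually_nhds_iff_ball.1 (hlo.and hdiff)
  refine ⟨ρ, hρ, fun y hy => ?_⟩
  set h := y - x with hhd
  set Q := ∑ i, ∑ j, m i j * h i * h j with hQ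
  have hin : ∀ s ∈ Icc (0:ℝ) 1, x + s • h ∈ ball x ρ := by
    intro s hs
    rw [mem_ball_iff_norm, add_sub_cancel_left, norm_smul, Real.norm_eq_abs, abs_of_nonneg hs.1]
    have : ‖h‖ < ρ := by rwa [mem_ball_iff_norm] at hy
    nlinarith [hs.2, norm_nonneg h]
  let g : ℝ → ℝ := fun s => u (x + s • h) - s * fderiv ℝ u x h - s ^ 2 / 2 * Q + t / 4 * s ^ 2 * ‖h‖ ^ 2
  have hg : ∀ s ∈ Icc (0:ℝ) 1, HasDerivAt g (fderiv ℝ u (x + s • h) h - fderiv ℝ u x h - s * Q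
      + t / 2 * s * ‖h‖ ^ 2) s := by
    intro s hs
    have h1 := (hb _ (hin s hs)).2.hasFDerivAt
    have h2 : HasDerivAt (fun s : ℝ => x + s • h) h s := by
      simpa using ((hasDerivAt_id s).smul_const h).const_add x
    have h3 := h1.comp_hasDerivAt s h2
    have h4 := ((h3.sub ((hasDerivAt_id s).mul_const (fderiv ℝ u x h))).sub
      ((((hasDerivAt_id s).pow 2).div_const 2).mul_const Q)).add
      ((((hasDerivAt_id s).pow 2).const_mul (t / 4)).mul_const (‖h‖ ^ 2))
    refine h4.congr_deriv ?_
    simp only [id, Nat.cast_ofNat, Nat.add_one_sub_one, pow_one]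
    ring
  have hanti : AntitoneOn g (Icc 0 1) := by
    refine antitoneOn_of_deriv_nonpos (convex_Icc 0 1)
      (fun s hs => (hg s hs).continuousAt.continuousWithinAt)
      (fun s hs => (hg s (interior_subset hs)).differentiableAt.differentiableWithinAt) ?_
    intro s hs
    have hs := interior_subset hs
    rw [(hg s hs).deriv]
    have h1 := (hb _ (hin s hs)).1
    rw [add_sub_cancel_left] at h1
    have h2 := (le_abs_self _).trans ((ContinuousLinearMap.le_opNorm _ h).trans
      (mul_le_mul_of_nonneg_right h1 (norm_nonneg h)))
    rw [norm_smul, Real.norm_eq_abs, abs_of_nonneg hs.1] at h2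
    simp only [ContinuousLinearMap.sub_apply, map_smul, ContinuousLinearMap.smul_apply,
      smul_eq_mul] at h2
    have h3 := mul_le_mul_of_nonneg_left (hm h) hs.1
    rw [← hU, hUh] at h2
    nlinarith
  have := hanti (left_mem_Icc.2 zero_le_one) (right_mem_Icc.2 zero_le_one) zero_le_one
  simp only [g] at this
  rw [show x + (1:ℝ) • h = y by simp [hhd]] at this
  simp at this
  linarith

theorem aux_rat {d : ℕ} (M : Matrix (Fin d) (Fin d) ℝ) (hM : M.IsSymm) (η : ℝ) (hη : 0 < η) :
    ∃ q : Fin d → Fin d → ℚ,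
      ∀ i j, |(Matrix.of fun i j => ((q i j : ℝ) + q j i)) i j - M i j| ≤ η := by
  have : ∀ i j, ∃ q : ℚ, |M i j / 2 - q| < η / 2 := fun i j => exists_rat_near _ (half_pos hη)
  choose q hq using this
  refine ⟨q, fun i j => ?_⟩
  have h1 := abs_lt.1 (hq i j)
  have h2 := abs_lt.1 (hq j i)
  rw [hM.apply] at h2
  rw [Matrix.of_apply, abs_le]
  constructor <;> linarith

theorem aux_pow3 (a b c p : ℝ) (hp : 0 < p) (ha : 0 ≤ a) (hb : 0 ≤ b) (hc : 0 ≤ c) :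
    (a + b + c) ^ p ≤ 3 ^ p * (a ^ p + b ^ p + c ^ p) := by
  have key : ∀ z, 0 ≤ z → a ≤ z → b ≤ z → c ≤ z → (a + b + c) ^ p ≤ 3 ^ p * z ^ p := by
    intro z hz h1 h2 h3
    rw [← Real.mul_rpow (by norm_num) hz]
    exact Real.rpow_le_rpow (by positivity) (by linarith) hp.le
  have A := Real.rpow_nonneg ha p
  have B := Real.rpow_nonneg hb p
  have C := Real.rpow_nonneg hc p
  have T : (0:ℝ) < 3 ^ p := by positivity
  rcases le_total a b with h | h <;> rcases le_total b c with hb2 | hb2 <;>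
    rcases le_total a c with hc3 | hc3 <;>
    first
    | exact (key a ha le_rfl (by linarith) (by linarith)).trans
        (mul_le_mul_of_nonneg_left (by linarith) T.le)
    | exact (key b hb (by linarith) le_rfl (by linarith)).trans
        (mul_le_mul_of_nonneg_left (by linarith) T.le)
    | exact (key c hc (by linarith) (by linarith) le_rfl).trans
        (mul_le_mul_of_nonneg_left (by linarith) T.le)

theorem aux_fin {d : ℕ} (p : ℝ) (hp : 0 < p) (A : Set (E d)) (hA : IsCompact A)
    (f h : E d → ℝ) (hf : Measurable f) (hh : Measurable h) (g : E d → ℝ) (C : ℝ) (hC : 0 ≤ C)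
    (hg : ∀ x, |g x| ≤ |f x| + |h x| + C)
    (h1 : (∫⁻ x in A, ENNReal.ofReal (|f x| ^ p)) < ⊤)
    (h2 : (∫⁻ x in A, ENNReal.ofReal (|h x| ^ p)) < ⊤) :
    (∫⁻ x in A, ENNReal.ofReal (|g x| ^ p)) < ⊤ := by
  have hle : ∀ x, ENNReal.ofReal (|g x| ^ p) ≤ ENNReal.ofReal (3 ^ p) *
      (ENNReal.ofReal (|f x| ^ p) + ENNReal.ofReal (|h x| ^ p) + ENNReal.ofReal (C ^ p)) := by
    intro x
    rw [← ENNReal.ofReal_add (by positivity) (by positivity),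
      ← ENNReal.ofReal_add (by positivity) (by positivity), ← ENNReal.ofReal_mul (by positivity)]
    refine ENNReal.ofReal_le_ofReal ?_
    exact (Real.rpow_le_rpow (abs_nonneg _) (hg x) hp.le).trans
      (aux_pow3 _ _ _ p hp (abs_nonneg _) (abs_nonneg _) hC)
  refine (lintegral_mono hle).trans_lt ?_
  rw [lintegral_const_mul' _ _ ENNReal.ofReal_ne_top, lintegral_add_right _ measurable_const,
    lintegral_add_right _ (by fun_prop)]
  refine ENNReal.mul_lt_top ENNReal.ofReal_lt_top (ENNReal.add_lt_top.2
    ⟨ENNReal.add_lt_top.2 ⟨h1, h2⟩, ?_⟩)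
  rw [setLIntegral_const]
  exact ENNReal.mul_lt_top ENNReal.ofReal_lt_top hA.measure_lt_top

theorem aux_leb {d : ℕ} (hd : 1 ≤ d) (p : ℝ) (hp : 0 < p) (R : ℝ) (g : E d → ℝ)
    (hg : Measurable g)
    (hfin : ∀ A : Set (E d), IsCompact A → A ⊆ ball (0 : E d) R →
      (∫⁻ x in A, ENNReal.ofReal (|g x| ^ p)) < ⊤) :
    ∀ᵐ x ∂(volume : Measure (E d)), x ∈ ball (0 : E d) R → g x = 0 →
      Tendsto (fun r => nLp p (ball x r) g) (𝓝[>] 0) (𝓝 0) := by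
  have : Nonempty (Fin d) := ⟨⟨0, hd⟩⟩
  have : Nontrivial (E d) := inferInstance
  have key : ∀ n : ℕ, ∀ᵐ x ∂(volume : Measure (E d)),
      Tendsto (fun r => (∫⁻ y in closedBall x r, (closedBall (0 : E d) (R - 1 / (n + 1))).indicator
        (fun y => ENNReal.ofReal (|g y| ^ p)) y) / volume (closedBall x r)) (𝓝[>] 0)
        (𝓝 ((closedBall (0 : E d) (R - 1 / (n + 1))).indicator
        (fun y => ENNReal.ofReal (|g y| ^ p)) x)) := by
    intro n
    have hm : Measurable ((closedBall (0 : E d) (R - 1 / (n + 1))).indicator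
        (fun y => ENNReal.ofReal (|g y| ^ p))) := by
      refine Measurable.indicator ?_ isClosed_closedBall.measurableSet
      fun_prop
    have hn : (∫⁻ y, (closedBall (0 : E d) (R - 1 / (n + 1))).indicator
        (fun y => ENNReal.ofReal (|g y| ^ p)) y) ≠ ⊤ := by
      rw [lintegral_indicator isClosed_closedBall.measurableSet]
      refine (hfin _ (isCompact_closedBall _ _) (closedBall_subset_ball ?_)).ne
      have : (0:ℝ) < 1 / (n + 1) := by positivity
      linarith
    filter_upwards [(Besicovitch.vitaliFamily (volume : Measure (E d))).ae_tendsto_lintegral_div'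
      hm hn] with x hx
    exact hx.comp (Besicovitch.tendsto_filterAt _ x)
  filter_upwards [ae_all_iff.2 key] with x hx hxR hgx
  rw [mem_ball_zero_iff] at hxR
  obtain ⟨n, hn⟩ := exists_nat_one_div_lt (sub_pos.2 hxR)
  have h1 := hx n
  have h0 : (closedBall (0 : E d) (R - 1 / (n + 1))).indicator
        (fun y => ENNReal.ofReal (|g y| ^ p)) x = 0 := by
    simp [indicator, hgx, Real.zero_rpow hp.ne']
  rw [h0] at h1
  have h2 : Tendsto (fun r => (volume (ball x r))⁻¹ *
      ∫⁻ y in ball x r, ENNReal.ofReal (|g y| ^ p)) (𝓝[>] 0) (𝓝 0) := by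
    refine tendsto_of_tendsto_of_tendsto_of_le_of_le' tendsto_const_nhds h1
      (Eventually.of_forall fun _ => zero_le) ?_
    have : ∀ᶠ r : ℝ in 𝓝[>] 0, r < R - 1 / (n + 1) - ‖x‖ :=
      nhdsWithin_le_nhds (eventually_lt_nhds (by linarith))
    filter_upwards [this] with r hr
    rw [Measure.addHaar_closedBall_eq_addHaar_ball, mul_comm, ← div_eq_mul_inv]
    refine ENNReal.div_le_div_right ?_ _
    refine (le_of_eq ?_).trans (lintegral_mono_set ball_subset_closedBall)
    refine setLIntegral_congr_fun isOpen_ball.measurableSet fun y hy => ?_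
    rw [indicator_of_mem]
    rw [mem_closedBall_zero_iff]
    rw [mem_ball_iff_norm] at hy
    have := norm_sub_norm_le y x
    linarith
  have h3 := h2.ennrpow_const (1 / p)
  rw [ENNReal.zero_rpow_of_pos (by positivity)] at h3
  exact h3

/-- The 'if' direction of the paper's Lemma 5.2: comparison with smooth test functions
implies `Ĥ[u] ≥ f` almost everywhere. -/
theorem stmt_14 (d : ℕ) (hd : 1 ≤ d) (δ : ℝ) (hδ : δ ∈ Set.Ioc (0 : ℝ) 1)
    (p : ℝ) (hp : (d : ℝ) / 2 < p) (R : ℝ) (hR : 0 < R)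
    (H : Matrix (Fin d) (Fin d) ℝ → E d → ℝ) (f : E d → ℝ) (u : E d → ℝ)
    (hHe : ∀ x, Elliptic δ fun m => H m x)
    (hHm : ∀ m, Measurable fun x => H m x)
    (hH0 : ∀ A : Set (E d), IsCompact A → A ⊆ ball (0 : E d) R →
      (∫⁻ x in A, ENNReal.ofReal (|H 0 x| ^ p)) < ⊤)
    (hfm : Measurable f)
    (hfl : ∀ A : Set (E d), IsCompact A → A ⊆ ball (0 : E d) R →
      (∫⁻ x in A, ENNReal.ofReal (|f x| ^ p)) < ⊤)
    (hu : ContDiffOn ℝ 2 u (ball (0 : E d) R))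
    (hcomp : ∃ N : ℝ, ∀ (x₀ : E d) (r : ℝ), 0 < r →
      closedBall x₀ r ⊆ ball (0 : E d) R →
      ∀ φ : E d → ℝ, ContDiffOn ℝ 2 φ (closedBall x₀ r) →
        ∀ x ∈ ball x₀ r,
          ENNReal.ofReal (u x - φ x) ≤
            (⨆ y ∈ sphere x₀ r, ENNReal.ofReal (u y - φ y)) +
              ENNReal.ofReal (N * r ^ 2) *
                nLp p (ball x₀ r) (fun y => min (f y - H (hess φ y) y) 0)) :
    ∀ᵐ x ∂volume, x ∈ ball (0 : E d) R → f x ≤ H (hess u x) x := by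
  have hd0 : (0:ℝ) < d := by exact_mod_cast hd
  have hp0 : 0 < p := lt_trans (by positivity) hp
  obtain ⟨N, hN⟩ := hcomp
  have hδ0 := hδ.1
  have hdi : 0 < δ⁻¹ := inv_pos.2 hδ0
  let mq : (Fin d → Fin d → ℚ) → Matrix (Fin d) (Fin d) ℝ := fun q =>
    Matrix.of fun i j => ((q i j : ℝ) + q j i)
  have hmq : ∀ q, (mq q).IsSymm := by
    intro q; ext i j; simp [mq, add_comm]
  have hae : ∀ q, ∀ᵐ x ∂(volume : Measure (E d)), x ∈ ball (0 : E d) R →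
      min (f x - H (mq q) x) 0 = 0 →
      Tendsto (fun r => nLp p (ball x r) (fun y => min (f y - H (mq q) y) 0)) (𝓝[>] 0) (𝓝 0) := by
    intro q
    obtain ⟨C, hC, hb⟩ := aux_H_bound hδ0 (mq q) (hmq q)
    refine aux_leb hd p hp0 R _ ((hfm.sub (hHm _)).min measurable_const) fun A hA hAR => ?_
    refine aux_fin p hp0 A hA f (H 0) hfm (hHm 0) _ C hC (fun x => ?_) (hfl A hA hAR) (hH0 A hA hAR)
    have h1 := hb _ (hHe x)
    have h2 : |min (f x - H (mq q) x) 0| ≤ |f x - H (mq q) x| := by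
      rcases min_choice (f x - H (mq q) x) 0 with h | h <;> rw [h]
      simp
    have h3 := abs_sub (f x) (H (mq q) x)
    linarith
  filter_upwards [ae_all_iff.2 hae] with x hx hxR
  by_contra! hlt
  set M := hess u x with hMdef
  have hux : ContDiffAt ℝ 2 u x := hu.contDiffAt (isOpen_ball.mem_nhds hxR)
  set γ := f x - H M x with hγ
  have hγ0 : 0 < γ := sub_pos.2 hlt
  -- choose the parameters
  set t : ℝ := δ * γ / (4 * d) with ht
  have ht0 : 0 < t := by positivity
  have hMs : M.IsSymm := (aux_taylor u x hux (M + (1:ℝ) • 1) 1 one_pos (fun h => by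
    rw [aux_qf_diag, EuclideanSpace.real_norm_sq_eq])).1
  obtain ⟨q, hq⟩ := aux_rat (M + t • 1) (by simp [Matrix.IsSymm, hMs.eq]) (t / (2 * d))
    (by positivity)
  change ∀ i j, |mq q i j - (M + t • 1) i j| ≤ _ at hq
  set m := mq q with hmdef
  set e : Matrix (Fin d) (Fin d) ℝ := m - (M + t • 1) with he
  have hes : e.IsSymm := by
    simp [he, Matrix.IsSymm, hMs.eq, (hmq q).eq, hmdef]
  have heb : ∀ i j, |e i j| ≤ t / (2 * d) := hq
  have hηd : t / (2 * d) * d = t / 2 := by field_simp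
  have hme : m = M + (e + t • 1) := by rw [he]; abel
  -- ellipticity
  have hpsd := aux_psd e hes _ t heb (by rw [hηd]; linarith)
  have htr := aux_trace e _ t heb
  have hHle : H m x ≤ f x := by
    have h1 := (hHe x M hMs _ hpsd).2
    simp only at h1
    rw [← hme] at h1
    have h2 := mul_le_mul_of_nonneg_left htr hdi.le
    have h3 : δ⁻¹ * (d * (t / (2 * d) + t)) ≤ γ := by
      have : (d:ℝ) * (t / (2 * d) + t) = t / 2 + d * t := by field_simp
      rw [this]
      have h4 : t / 2 + d * t ≤ 2 * (d * t) := by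
        have : (1:ℝ) ≤ d := by exact_mod_cast hd
        nlinarith
      have h5 : 2 * (d * t) = δ * γ / 2 := by rw [ht]; field_simp; norm_num
      rw [h5] at h4
      rw [inv_mul_le_iff₀ hδ0]
      have := mul_pos hδ0 hγ0
      linarith
    linarith
  have hlim := hx q hxR (min_eq_right (sub_nonneg.2 hHle))
  -- Taylor
  obtain ⟨-, ρ, hρ, htay⟩ := aux_taylor u x hux m (t / 2) (half_pos ht0) (fun h => by
    rw [hme]
    have h1 := aux_qf_diag e t h.ofLp
    have h2 := (abs_le.1 (aux_qf_bound e _ heb h.ofLp)).1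
    rw [hηd] at h2
    have h3 : ∑ i, ∑ j, (M + (e + t • (1 : Matrix (Fin d) (Fin d) ℝ))) i j * h i * h j
      = ∑ i, ∑ j, M i j * h i * h j +
        ∑ i, ∑ j, (e + t • (1 : Matrix (Fin d) (Fin d) ℝ)) i j * h i * h j := by
      simp only [Matrix.add_apply M, add_mul, Finset.sum_add_distrib]
    rw [h3, h1, EuclideanSpace.real_norm_sq_eq]
    linarith)
  set κ : ℝ := t / 2 / 4 with hκ
  have hκ0 : 0 < κ := by positivity
  have hev : ∀ᶠ r : ℝ in 𝓝[>] 0, ENNReal.ofReal κ ≤ ENNReal.ofReal N *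
      nLp p (ball x r) (fun y => min (f y - H m y) 0) := by
    have e1 : ∀ᶠ r : ℝ in 𝓝[>] 0, r < ρ := nhdsWithin_le_nhds (eventually_lt_nhds hρ)
    have e2 : ∀ᶠ r : ℝ in 𝓝[>] 0, r < R - ‖x‖ :=
      nhdsWithin_le_nhds (eventually_lt_nhds (sub_pos.2 (mem_ball_zero_iff.1 hxR)))
    filter_upwards [e1, e2, self_mem_nhdsWithin] with r hr1 hr2 hr0
    have hr0 : 0 < r := hr0
    obtain ⟨c1, c2⟩ := aux_hess_quad m (hmq q) (u x - κ * r ^ 2) (fderiv ℝ u x) x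
    have hsub : closedBall x r ⊆ ball (0 : E d) R := by
      intro y hy
      rw [mem_closedBall_iff_norm] at hy
      rw [mem_ball_zero_iff]
      have := norm_sub_norm_le y x
      linarith
    have h1 := hN x r hr0 hsub _ c1.contDiffOn x (mem_ball_self hr0)
    simp only [c2] at h1
    have h2 : (⨆ y ∈ sphere x r, ENNReal.ofReal (u y - (u x - κ * r ^ 2 + fderiv ℝ u x (y - x) +
        (1 / 2) * ∑ i, ∑ j, m i j * (y - x) i * (y - x) j))) = 0 := by
      refine le_antisymm (iSup₂_le fun y hy => ?_) zero_le
      rw [mem_sphere_iff_norm] at hy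
      have h3 := htay y (by rw [mem_ball_iff_norm]; linarith)
      rw [hy] at h3
      rw [ENNReal.ofReal_of_nonpos]
      linarith
    rw [h2, zero_add] at h1
    have h4 : u x - (u x - κ * r ^ 2 + fderiv ℝ u x (x - x) +
        (1 / 2) * ∑ i, ∑ j, m i j * (x - x) i * (x - x) j) = κ * r ^ 2 := by
      simp
    rw [h4, ENNReal.ofReal_mul' (sq_nonneg r), ENNReal.ofReal_mul' (sq_nonneg r),
      mul_right_comm] at h1
    exact (ENNReal.mul_le_mul_iff_left (by simpa using hr0.ne') ENNReal.ofReal_ne_top).1 h1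
  have hlim2 := ENNReal.Tendsto.const_mul (a := ENNReal.ofReal N) hlim
    (Or.inr ENNReal.ofReal_ne_top)
  rw [mul_zero] at hlim2
  have := ge_of_tendsto hlim2 hev
  simp at this
  linarith
end
end

section
/- Let d ≥ 1 be an integer, δ ∈ (0,1], p ∈ (d/2,∞), R ∈ (0,∞). Let Ĥ(m,x) (m a symmetric d×d matrix, x ∈ B_R) be δ-elliptic, measurable in x for each fixed m, with Ĥ(0,·) ∈ L_p on compact subsets of B_R, and let f be in L_p on compact subsets of B_R. Let u be twice continuously differentiable on B_R. Suppose there exists a constant N such that for every ball B_r(x₀) with closure contained in B_R and every φ twice continuously differentiable on B̄_r(x₀), the inequality u(x) ≥ φ(x) − sup_{∂B_r(x₀)} (u − φ)₋ − N r² (⨍_{B_r(x₀)} ((f(y) − Ĥ(D²φ(y),y))₊)^p dy)^{1/p} holds for all x ∈ B_r(x₀). Then Ĥ(D²u(x),x) ≤ f(x) for almost every x ∈ B_R. -/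
open MeasureTheory Metric Set Filter
open scoped ENNReal RealInnerProductSpace

noncomputable section

lemma psd_aux {d : ℕ} (S : Matrix (Fin d) (Fin d) ℝ) (hS : S.IsSymm) :
    (S + (∑ i, ∑ j, |S i j|) • (1 : Matrix (Fin d) (Fin d) ℝ)).PosSemidef := by
  refine Matrix.PosSemidef.of_dotProduct_mulVec_nonneg ?_ ?_
  · ext i j
    have := hS.apply i j
    simp [Matrix.one_apply, this, eq_comm]
  · intro x
    have h1 : star x ⬝ᵥ ((S + (∑ i, ∑ j, |S i j|) • (1 : Matrix (Fin d) (Fin d) ℝ)).mulVec x)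
        = (∑ i, ∑ j, S i j * (x i * x j)) + (∑ i, ∑ j, |S i j|) * ∑ k, x k ^ 2 := by
      rw [Matrix.add_mulVec, dotProduct_add, Matrix.smul_mulVec, Matrix.one_mulVec,
        dotProduct_smul, smul_eq_mul]
      congr 1
      · simp only [dotProduct, Matrix.mulVec, Finset.mul_sum]
        refine Finset.sum_congr rfl fun i _ => Finset.sum_congr rfl fun j _ => ?_
        simp; ring
      · congr 1
        simp [dotProduct, sq]
    rw [h1, Finset.sum_mul, ← Finset.sum_add_distrib]
    refine Finset.sum_nonneg fun i _ => ?_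
    rw [Finset.sum_mul, ← Finset.sum_add_distrib]
    refine Finset.sum_nonneg fun j _ => ?_
    have hi : x i ^ 2 ≤ ∑ k, x k ^ 2 :=
      Finset.single_le_sum (f := fun k => x k ^ 2) (fun k _ => sq_nonneg _) (Finset.mem_univ i)
    have hj : x j ^ 2 ≤ ∑ k, x k ^ 2 :=
      Finset.single_le_sum (f := fun k => x k ^ 2) (fun k _ => sq_nonneg _) (Finset.mem_univ j)
    have h2 : |x i * x j| ≤ ∑ k, x k ^ 2 := by
      rw [abs_le]; constructor <;> nlinarith [sq_nonneg (x i - x j), sq_nonneg (x i + x j)]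
    have h3 := neg_abs_le (S i j * (x i * x j))
    rw [abs_mul] at h3
    nlinarith [mul_le_mul_of_nonneg_left h2 (abs_nonneg (S i j))]

lemma ell_le {d : ℕ} {δ : ℝ} (hδ : 0 < δ) {F : Matrix (Fin d) (Fin d) ℝ → ℝ}
    (hF : Elliptic δ F) (m m' : Matrix (Fin d) (Fin d) ℝ) (hm : m.IsSymm) (hm' : m'.IsSymm) :
    F m' - F m ≤ δ⁻¹ * ((1 + d) * ∑ i, ∑ j, |m' i j - m i j|) := by
  set c := ∑ i, ∑ j, |m' i j - m i j| with hc
  have hc0 : 0 ≤ c := Finset.sum_nonneg fun i _ => Finset.sum_nonneg fun j _ => abs_nonneg _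
  have h1 := psd_aux (m' - m) (hm'.sub hm)
  have h2 : (c • (1 : Matrix (Fin d) (Fin d) ℝ)).PosSemidef := Matrix.PosSemidef.one.smul hc0
  simp only [Matrix.sub_apply, ← hc] at h1
  have h3 := (hF m hm _ h1).2
  have h4 := (hF m' hm' _ h2).1
  have e : m + (m' - m + c • (1 : Matrix (Fin d) (Fin d) ℝ)) = m' + c • 1 := by abel
  rw [e] at h3
  have h5 : 0 ≤ δ * (c • (1 : Matrix (Fin d) (Fin d) ℝ)).trace := by
    simp [Matrix.trace_smul]; positivity
  have h6 : (m' - m + c • (1 : Matrix (Fin d) (Fin d) ℝ)).trace ≤ (1 + d) * c := by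
    have : (m' - m).trace ≤ c := by
      rw [Matrix.trace]
      refine Finset.sum_le_sum fun i _ => ?_
      refine (le_abs_self _).trans ?_
      exact Finset.single_le_sum (f := fun j => |m' i j - m i j|) (fun k _ => abs_nonneg _)
        (Finset.mem_univ i)
    rw [Matrix.trace_add, Matrix.trace_smul, Matrix.trace_one, Fintype.card_fin, smul_eq_mul]
    linarith
  have h7 := mul_le_mul_of_nonneg_left h6 (inv_pos.2 hδ).le
  linarith

lemma ell_abs {d : ℕ} {δ : ℝ} (hδ : 0 < δ) {F : Matrix (Fin d) (Fin d) ℝ → ℝ}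
    (hF : Elliptic δ F) (m m' : Matrix (Fin d) (Fin d) ℝ) (hm : m.IsSymm) (hm' : m'.IsSymm) :
    |F m' - F m| ≤ δ⁻¹ * ((1 + d) * ∑ i, ∑ j, |m' i j - m i j|) := by
  rw [abs_le]
  refine ⟨?_, ell_le hδ hF m m' hm hm'⟩
  have := ell_le hδ hF m' m hm' hm
  simp only [fun i j => abs_sub_comm (m i j) (m' i j)] at this
  linarith

lemma hess_symm {d : ℕ} {u : E d → ℝ} {x : E d} (hu : ContDiffAt ℝ 2 u x) :
    hess u x = Matrix.of (fun i j => fderiv ℝ (fderiv ℝ u) x (EuclideanSpace.single i 1)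
      (EuclideanSpace.single j 1)) ∧ (hess u x).IsSymm := by
  have hd : DifferentiableAt ℝ (fderiv ℝ u) x :=
    (hu.fderiv_right (m := 1) (by norm_num)).differentiableAt (by norm_num)
  have h : hess u x = Matrix.of (fun i j => fderiv ℝ (fderiv ℝ u) x (EuclideanSpace.single i 1)
      (EuclideanSpace.single j 1)) := by
    ext i j
    simp only [hess, Matrix.of_apply]
    rw [fderiv_clm_apply hd (differentiableAt_const _)]
    simp
  refine ⟨h, ?_⟩
  rw [h]
  ext i j
  exact (hu.isSymmSndFDerivAt (by simp)) _ _

lemma hess_cont {d : ℕ} {u : E d → ℝ} {U : Set (E d)} (hU : IsOpen U)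
    (hu : ContDiffOn ℝ 2 u U) : ContinuousOn (fun x => (hess u x : Matrix (Fin d) (Fin d) ℝ)) U := by
  have h1 : ContDiffOn ℝ 1 (fderiv ℝ u) U := hu.fderiv_of_isOpen hU (by norm_num)
  have h2 : ContinuousOn (fderiv ℝ (fderiv ℝ u)) U := h1.continuousOn_fderiv_of_isOpen hU le_rfl
  have h3 : ContinuousOn (fun x => (Matrix.of (fun i j => fderiv ℝ (fderiv ℝ u) x
      (EuclideanSpace.single i 1) (EuclideanSpace.single j 1)) : Matrix (Fin d) (Fin d) ℝ)) U := by
    refine continuousOn_pi.2 fun i => continuousOn_pi.2 fun j => ?_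
    exact (h2.clm_apply continuousOn_const).clm_apply continuousOn_const
  exact h3.congr fun x hx => (hess_symm (hu.contDiffAt (hU.mem_nhds hx))).1

/-- the perturbed test function -/
def tst {d : ℕ} (u : E d → ℝ) (ε r : ℝ) (x₀ : E d) (x : E d) : ℝ :=
  u x + ε * (r ^ 2 - ‖x - x₀‖ ^ 2)

lemma tst_cd {d : ℕ} {u : E d → ℝ} {U : Set (E d)} (hu : ContDiffOn ℝ 2 u U) (ε r : ℝ) (x₀ : E d) :
    ContDiffOn ℝ 2 (tst u ε r x₀) U := by
  unfold tst
  refine hu.add (ContDiff.contDiffOn ?_)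
  exact contDiff_const.mul (contDiff_const.sub ((contDiff_id.sub contDiff_const).norm_sq ℝ))

lemma tst_hess {d : ℕ} {u : E d → ℝ} {x : E d} (hu : ContDiffAt ℝ 2 u x) (ε r : ℝ) (x₀ : E d) :
    hess (tst u ε r x₀) x = hess u x - (2 * ε) • (1 : Matrix (Fin d) (Fin d) ℝ) := by
  have hev : ∀ᶠ y in nhds x, ContDiffAt ℝ 2 u y := hu.eventually (by norm_num)
  ext i j
  simp only [hess, Matrix.of_apply, Matrix.sub_apply, Matrix.smul_apply, Matrix.one_apply]
  have h1 : (fun y => fderiv ℝ (tst u ε r x₀) y (EuclideanSpace.single j 1)) =ᶠ[nhds x]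
      fun y => fderiv ℝ u y (EuclideanSpace.single j 1)
        - (2 * ε) * inner ℝ (EuclideanSpace.single j (1:ℝ)) (y - x₀) := by
    filter_upwards [hev] with y hy
    have e1 : HasFDerivAt u (fderiv ℝ u y) y := (hy.differentiableAt (by norm_num)).hasFDerivAt
    have e2 := ((hasFDerivAt_id (𝕜 := ℝ) y).sub_const x₀).norm_sq
    have e3 : HasFDerivAt (tst u ε r x₀) _ y := e1.add ((e2.const_sub (r ^ 2)).const_mul ε)
    rw [e3.fderiv]
    rw [real_inner_comm]
    simp [inner_sub_left]
    ring
  rw [h1.fderiv_eq]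
  have hd : DifferentiableAt ℝ (fderiv ℝ u) x :=
    (hu.fderiv_right (m := 1) (by norm_num)).differentiableAt (by norm_num)
  have e1 := (hd.clm_apply (differentiableAt_const (EuclideanSpace.single j (1:ℝ)))).hasFDerivAt
  have e2 : HasFDerivAt (fun y : E d => (2 * ε) * inner ℝ (EuclideanSpace.single j (1:ℝ)) (y - x₀))
      ((2 * ε) • (innerSL ℝ (EuclideanSpace.single j (1:ℝ)) : E d →L[ℝ] ℝ)) x := by
    have := ((innerSL ℝ (EuclideanSpace.single j (1:ℝ)) : E d →L[ℝ] ℝ).hasFDerivAt (x := x - x₀)).comp x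
      ((hasFDerivAt_id (𝕜 := ℝ) x).sub_const x₀)
    exact this.const_mul (2 * ε)
  rw [HasFDerivAt.fderiv (e1.fun_sub e2)]
  simp [EuclideanSpace.inner_single_left, Pi.single_apply, eq_comm]

lemma cubic_rpow {a b c p : ℝ} (ha : 0 ≤ a) (hb : 0 ≤ b) (hc : 0 ≤ c) (hp : 0 < p) :
    (a + b + c) ^ p ≤ 3 ^ p * (a ^ p + b ^ p + c ^ p) := by
  have h1 : a + b + c ≤ 3 * max a (max b c) := by
    have := le_max_left a (max b c)
    have := le_max_right a (max b c)
    have := le_max_left b c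
    have := le_max_right b c
    linarith
  have h2 : (max a (max b c)) ^ p ≤ a ^ p + b ^ p + c ^ p := by
    have := Real.rpow_nonneg ha p
    have := Real.rpow_nonneg hb p
    have := Real.rpow_nonneg hc p
    rcases max_choice a (max b c) with h | h
    · rw [h]; linarith
    · rw [h]
      rcases max_choice b c with h | h <;> rw [h] <;> linarith
  calc (a + b + c) ^ p ≤ (3 * max a (max b c)) ^ p :=
        Real.rpow_le_rpow (by positivity) h1 hp.le
    _ = 3 ^ p * (max a (max b c)) ^ p := Real.mul_rpow (by norm_num) (by positivity)
    _ ≤ _ := mul_le_mul_of_nonneg_left h2 (by positivity)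

/-- symmetrize and shift -/
def symsh {d : ℕ} (ε : ℝ) (m : Fin d → Fin d → ℝ) : Matrix (Fin d) (Fin d) ℝ :=
  Matrix.of (fun i j => (m i j + m j i) / 2) - (2 * ε) • (1 : Matrix (Fin d) (Fin d) ℝ)

lemma symsh_symm {d : ℕ} (ε : ℝ) (m : Fin d → Fin d → ℝ) : (symsh ε m).IsSymm := by
  ext i j
  simp [symsh, Matrix.one_apply, eq_comm, add_comm]

lemma meas_aux {d : ℕ} {δ : ℝ} (hδ : 0 < δ) {H : Matrix (Fin d) (Fin d) ℝ → E d → ℝ}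
    (hHe : ∀ x, Elliptic δ fun m => H m x) (hHm : ∀ m, Measurable fun x => H m x)
    (h : E d → Fin d → Fin d → ℝ) (hh : Measurable h) (ε : ℝ) :
    Measurable (fun y => H (symsh ε (h y)) y) := by
  have key : Measurable (Function.uncurry fun (m : Fin d → Fin d → ℝ) (y : E d) =>
      H (symsh ε m) y) := by
    refine measurable_uncurry_of_continuous_of_measurable (fun y => ?_) (fun m => hHm _)
    rw [continuous_iff_continuousAt]
    intro m
    rw [ContinuousAt, tendsto_iff_dist_tendsto_zero]
    refine squeeze_zero (fun _ => dist_nonneg) (fun m' => ?_)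
      (g := fun m' => δ⁻¹ * ((1 + d) * ∑ i, ∑ j, |symsh ε m' i j - symsh ε m i j|)) ?_
    · exact ell_abs hδ (hHe y) _ _ (symsh_symm ε m) (symsh_symm ε m')
    · have hc : Continuous fun m' : Fin d → Fin d → ℝ =>
          δ⁻¹ * ((1 + d) * ∑ i, ∑ j, |symsh ε m' i j - symsh ε m i j|) := by
        simp only [symsh, Matrix.sub_apply, Matrix.of_apply]
        fun_prop
      have := hc.tendsto m
      simpa using this
  exact key.comp (hh.prodMk measurable_id)

lemma main_aux (d : ℕ) (hd : 1 ≤ d) (δ : ℝ) (hδ : 0 < δ)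
    (p : ℝ) (hp : 0 < p) (R : ℝ)
    (H : Matrix (Fin d) (Fin d) ℝ → E d → ℝ) (f : E d → ℝ) (u : E d → ℝ)
    (hHe : ∀ x, Elliptic δ fun m => H m x)
    (hHm : ∀ m, Measurable fun x => H m x)
    (hH0 : ∀ A : Set (E d), IsCompact A → A ⊆ ball (0 : E d) R →
      (∫⁻ x in A, ENNReal.ofReal (|H 0 x| ^ p)) < ⊤)
    (hfm : Measurable f)
    (hfl : ∀ A : Set (E d), IsCompact A → A ⊆ ball (0 : E d) R →
      (∫⁻ x in A, ENNReal.ofReal (|f x| ^ p)) < ⊤)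
    (hu : ContDiffOn ℝ 2 u (ball (0 : E d) R)) (N : ℝ)
    (hcomp : ∀ (x₀ : E d) (r : ℝ), 0 < r →
      closedBall x₀ r ⊆ ball (0 : E d) R →
      ∀ φ : E d → ℝ, ContDiffOn ℝ 2 φ (closedBall x₀ r) →
        ∀ x ∈ ball x₀ r,
          ENNReal.ofReal (φ x - u x) ≤
            (⨆ y ∈ sphere x₀ r, ENNReal.ofReal (φ y - u y)) +
              ENNReal.ofReal (N * r ^ 2) *
                nLp p (ball x₀ r) (fun y => max (f y - H (hess φ y) y) 0))
    (s : ℝ) (hs : s < R) (ε : ℝ) (hε : 0 < ε) :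
    ∀ᵐ x ∂volume, x ∈ ball (0 : E d) s →
      H (hess u x - (2 * ε) • (1 : Matrix (Fin d) (Fin d) ℝ)) x ≤ f x := by
  classical
  have : Nonempty (Fin d) := ⟨⟨0, hd⟩⟩
  have hKU : closedBall (0 : E d) s ⊆ ball 0 R := closedBall_subset_ball hs
  have hK : IsCompact (closedBall (0 : E d) s) := isCompact_closedBall _ _
  have hat : ∀ y ∈ ball (0 : E d) R, ContDiffAt ℝ 2 u y := fun y hy =>
    hu.contDiffAt (isOpen_ball.mem_nhds hy)
  have hcont : ContinuousOn (fun x => (hess u x : Matrix (Fin d) (Fin d) ℝ)) (ball (0 : E d) R) :=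
    hess_cont isOpen_ball hu
  set h : E d → Fin d → Fin d → ℝ :=
    (ball (0 : E d) R).piecewise (fun x => hess u x) (fun _ => 0) with hh
  have hhm : Measurable h := by
    refine ContinuousOn.measurable_piecewise ?_ continuousOn_const measurableSet_ball
    exact hcont
  have hsym : ∀ y ∈ ball (0 : E d) R,
      symsh ε (h y) = hess u y - (2 * ε) • (1 : Matrix (Fin d) (Fin d) ℝ) := by
    intro y hy
    have hsy := (hess_symm (hat y hy)).2
    have : h y = hess u y := Set.piecewise_eq_of_mem _ _ _ hy
    unfold symsh
    rw [this]
    congr 1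
    ext i j
    simp only [Matrix.of_apply]
    rw [hsy.apply i j]
    ring
  have hGm : Measurable (fun y => H (symsh ε (h y)) y) := meas_aux hδ hHe hHm h hhm ε
  set g : E d → ℝ≥0∞ := fun y => ENNReal.ofReal (|max (f y - H (symsh ε (h y)) y) 0| ^ p) with hg
  have hgm : Measurable g := by
    refine ENNReal.measurable_ofReal.comp (Measurable.pow_const ?_ p)
    exact measurable_norm.comp ((hfm.sub hGm).max measurable_const)
  obtain ⟨C, hC⟩ := hK.exists_bound_of_continuousOn
    (f := fun y => δ⁻¹ * ((1 + d) * ∑ i, ∑ j, |symsh ε (hess u y) i j - (0:ℝ)|)) (by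
      have hc : Continuous fun m' : Fin d → Fin d → ℝ =>
          δ⁻¹ * ((1 + d) * ∑ i, ∑ j, |symsh ε m' i j - (0:ℝ)|) := by
        simp only [symsh, Matrix.sub_apply, Matrix.of_apply]
        fun_prop
      exact hc.comp_continuousOn (hcont.mono hKU))
  have hbd : ∀ y ∈ closedBall (0 : E d) s, g y ≤ ENNReal.ofReal (3 ^ p) *
      (ENNReal.ofReal (|f y| ^ p) + ENNReal.ofReal (|H 0 y| ^ p) + ENNReal.ofReal (|C| ^ p)) := by
    intro y hy
    have e : h y = hess u y := Set.piecewise_eq_of_mem _ _ _ (hKU hy)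
    have h1 := ell_abs hδ (hHe y) 0 (symsh ε (h y)) (by simp [Matrix.IsSymm]) (symsh_symm _ _)
    have h2 := (le_abs_self _).trans (hC y hy)
    rw [e] at h1
    simp only [Matrix.zero_apply] at h1
    have h3 := h1.trans (h2.trans (le_abs_self C))
    have h4 : |max (f y - H (symsh ε (h y)) y) 0| ≤ |f y| + |H 0 y| + |C| := by
      rw [e, abs_of_nonneg (le_max_right _ _)]
      refine max_le ?_ (by positivity)
      have := abs_le.1 h3
      linarith [le_abs_self (f y), neg_abs_le (H 0 y)]
    rw [← ENNReal.ofReal_add (by positivity) (by positivity),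
      ← ENNReal.ofReal_add (by positivity) (by positivity), ← ENNReal.ofReal_mul (by positivity)]
    refine ENNReal.ofReal_le_ofReal ?_
    exact (Real.rpow_le_rpow (abs_nonneg _) h4 hp.le).trans
      (cubic_rpow (abs_nonneg _) (abs_nonneg _) (abs_nonneg _) hp)
  have hfin : (∫⁻ y, (closedBall (0 : E d) s).indicator g y) ≠ ⊤ := by
    rw [lintegral_indicator measurableSet_closedBall]
    refine ne_top_of_le_ne_top ?_ (setLIntegral_mono' measurableSet_closedBall hbd)
    have m1 : Measurable fun y => ENNReal.ofReal (|f y| ^ p) :=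
      ENNReal.measurable_ofReal.comp ((measurable_norm.comp hfm).pow_const p)
    have m2 : Measurable fun y => ENNReal.ofReal (|H 0 y| ^ p) :=
      ENNReal.measurable_ofReal.comp ((measurable_norm.comp (hHm 0)).pow_const p)
    rw [lintegral_const_mul _ ((m1.fun_add m2).fun_add measurable_const),
      lintegral_add_left (m1.fun_add m2), lintegral_add_left m1]
    refine ENNReal.mul_ne_top ENNReal.ofReal_ne_top (ENNReal.add_ne_top.2
      ⟨ENNReal.add_ne_top.2 ⟨(hfl _ hK hKU).ne, (hH0 _ hK hKU).ne⟩, ?_⟩)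
    rw [setLIntegral_const]
    exact ENNReal.mul_ne_top ENNReal.ofReal_ne_top hK.measure_lt_top.ne
  filter_upwards [(Besicovitch.vitaliFamily (volume : Measure (E d))).ae_tendsto_lintegral_div
    (hgm.indicator measurableSet_closedBall).aemeasurable hfin] with x hx hxs
  by_contra hlt
  push Not at hlt
  have hxK := ball_subset_closedBall hxs
  have hx0 : (closedBall (0 : E d) s).indicator g x = 0 := by
    rw [Set.indicator_of_mem hxK, hg]
    simp only
    rw [hsym x (hKU hxK), max_eq_right (by linarith)]
    simp [Real.zero_rpow hp.ne']
  rw [hx0] at hx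
  have hx2 := hx.comp (Besicovitch.tendsto_filterAt volume x)
  have hx3 := ENNReal.Tendsto.const_mul (a := ENNReal.ofReal N)
    (((ENNReal.continuous_rpow_const (y := 1 / p)).tendsto 0).comp hx2)
    (Or.inr ENNReal.ofReal_ne_top)
  have hp' : 0 < 1 / p := by positivity
  rw [ENNReal.zero_rpow_of_pos hp', mul_zero] at hx3
  have hge : ∀ᶠ r in nhdsWithin (0:ℝ) (Ioi 0), ENNReal.ofReal ε ≤ ENNReal.ofReal N *
      ((∫⁻ y in closedBall x r, (closedBall (0 : E d) s).indicator g y) /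
        volume (closedBall x r)) ^ (1 / p) := by
    have hpos : 0 < s - dist x 0 := by simpa using hxs
    filter_upwards [Ioo_mem_nhdsGT hpos] with r hr
    have hr0 : 0 < r := hr.1
    have hsub : closedBall x r ⊆ closedBall 0 s :=
      closedBall_subset_closedBall' (by linarith [hr.2])
    have hc := hcomp x r hr0 (hsub.trans hKU) (tst u ε r x)
      (tst_cd (hu.mono (hsub.trans hKU)) ε r x) x (mem_ball_self hr0)
    have hz : (⨆ y ∈ sphere x r, ENNReal.ofReal (tst u ε r x y - u y)) = 0 := by
      simp only [ENNReal.iSup_eq_zero]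
      intro y hy
      have : ‖y - x‖ = r := by simpa [dist_eq_norm] using hy
      simp [tst, this]
    rw [hz, zero_add] at hc
    have e1 : tst u ε r x x - u x = ε * r ^ 2 := by simp [tst]
    have hr2 : ENNReal.ofReal (r ^ 2) ≠ 0 := by
      simpa using hr0.ne'
    rw [e1, ENNReal.ofReal_mul hε.le, ENNReal.ofReal_mul' (sq_nonneg r),
      mul_right_comm] at hc
    have hc2 := (ENNReal.mul_le_mul_iff_left hr2 ENNReal.ofReal_ne_top).1 hc
    refine hc2.trans ?_
    gcongr
    unfold nLp
    refine ENNReal.rpow_le_rpow ?_ hp'.le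
    rw [ENNReal.div_eq_inv_mul, Measure.addHaar_closedBall_eq_addHaar_ball]
    refine mul_le_mul_right ?_ _
    calc (∫⁻ y in ball x r, ENNReal.ofReal (|max (f y - H (hess (tst u ε r x) y) y) 0| ^ p))
        = ∫⁻ y in ball x r, (closedBall (0 : E d) s).indicator g y := by
          refine setLIntegral_congr_fun measurableSet_ball fun y hy => ?_
          have hyK := hsub (ball_subset_closedBall hy)
          beta_reduce
          rw [Set.indicator_of_mem hyK, tst_hess (hat y (hKU hyK)), ← hsym y (hKU hyK)]
      _ ≤ _ := lintegral_mono_set ball_subset_closedBall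
  have hle := ge_of_tendsto hx3 hge
  have : 0 < ENNReal.ofReal ε := ENNReal.ofReal_pos.2 hε
  exact absurd hle (not_le.2 this)

/-- The 'if' direction of the paper's Lemma 5.3: comparison with smooth test functions
implies `Ĥ[u] ≤ f` almost everywhere. -/
theorem stmt_15 (d : ℕ) (hd : 1 ≤ d) (δ : ℝ) (hδ : δ ∈ Set.Ioc (0 : ℝ) 1)
    (p : ℝ) (hp : (d : ℝ) / 2 < p) (R : ℝ) (hR : 0 < R)
    (H : Matrix (Fin d) (Fin d) ℝ → E d → ℝ) (f : E d → ℝ) (u : E d → ℝ)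
    (hHe : ∀ x, Elliptic δ fun m => H m x)
    (hHm : ∀ m, Measurable fun x => H m x)
    (hH0 : ∀ A : Set (E d), IsCompact A → A ⊆ ball (0 : E d) R →
      (∫⁻ x in A, ENNReal.ofReal (|H 0 x| ^ p)) < ⊤)
    (hfm : Measurable f)
    (hfl : ∀ A : Set (E d), IsCompact A → A ⊆ ball (0 : E d) R →
      (∫⁻ x in A, ENNReal.ofReal (|f x| ^ p)) < ⊤)
    (hu : ContDiffOn ℝ 2 u (ball (0 : E d) R))
    (hcomp : ∃ N : ℝ, ∀ (x₀ : E d) (r : ℝ), 0 < r →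
      closedBall x₀ r ⊆ ball (0 : E d) R →
      ∀ φ : E d → ℝ, ContDiffOn ℝ 2 φ (closedBall x₀ r) →
        ∀ x ∈ ball x₀ r,
          ENNReal.ofReal (φ x - u x) ≤
            (⨆ y ∈ sphere x₀ r, ENNReal.ofReal (φ y - u y)) +
              ENNReal.ofReal (N * r ^ 2) *
                nLp p (ball x₀ r) (fun y => max (f y - H (hess φ y) y) 0)) :
    ∀ᵐ x ∂volume, x ∈ ball (0 : E d) R → H (hess u x) x ≤ f x := by
  obtain ⟨N, hN⟩ := hcomp
  have hd0 : (1 : ℝ) ≤ d := by exact_mod_cast hd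
  have hp0 : 0 < p := by linarith
  have key : ∀ n k : ℕ, ∀ᵐ x ∂volume, x ∈ ball (0 : E d) (R - 1 / ((n : ℝ) + 1)) →
      H (hess u x - (2 * (1 / ((k : ℝ) + 1))) • (1 : Matrix (Fin d) (Fin d) ℝ)) x ≤ f x := by
    intro n k
    have h1 : (0 : ℝ) < 1 / ((n : ℝ) + 1) := by positivity
    exact main_aux d hd δ hδ.1 p hp0 R H f u hHe hHm hH0 hfm hfl hu N hN _ (by linarith) _
      (by positivity)
  have key2 := ae_all_iff.2 fun n => ae_all_iff.2 fun k => key n k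
  filter_upwards [key2] with x hx hxR
  have hxR' : ‖x‖ < R := by simpa using hxR
  obtain ⟨n, hn⟩ := exists_nat_one_div_lt (sub_pos.2 hxR')
  have hxn : x ∈ ball (0 : E d) (R - 1 / ((n : ℝ) + 1)) := by
    rw [mem_ball_zero_iff]; linarith
  have hsy := (hess_symm (hu.contDiffAt (isOpen_ball.mem_nhds hxR))).2
  have hb : ∀ k : ℕ, H (hess u x) x - δ⁻¹ * (2 * (1 / ((k : ℝ) + 1)) * d) ≤ f x := by
    intro k
    set c : ℝ := 2 * (1 / ((k : ℝ) + 1)) with hc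
    have hc0 : 0 ≤ c := by positivity
    have h1 := hx n k hxn
    have hS : (hess u x - c • (1 : Matrix (Fin d) (Fin d) ℝ)).IsSymm :=
      hsy.sub (Matrix.isSymm_one.smul c)
    have h2 := (hHe x _ hS (c • 1) (Matrix.PosSemidef.one.smul hc0)).2
    rw [sub_add_cancel, Matrix.trace_smul, Matrix.trace_one, Fintype.card_fin, smul_eq_mul] at h2
    linarith
  have ht : Tendsto (fun k : ℕ => H (hess u x) x - δ⁻¹ * (2 * (1 / ((k : ℝ) + 1)) * d)) atTop
      (nhds (H (hess u x) x - δ⁻¹ * (2 * 0 * d))) :=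
    tendsto_const_nhds.sub (((tendsto_one_div_add_atTop_nhds_zero_nat.const_mul 2).mul_const
      (d : ℝ)).const_mul δ⁻¹)
  have := le_of_tendsto' ht hb
  simpa using this
end
end
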